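/- arXiv:2203.00950 — 2 statements merged into one kernel-verified Lean document; each statement's English description precedes it below -/
import Mathlib

section
/- Let C ⊂ ℝ^N be a nonempty, closed, bounded and convex set with nonempty interior, and let f : ℝ^N → ℝ^N be continuous. Suppose that there exists an outer normal field ν : ∂C → S^{N−1} such that ⟨f(x), ν(x)⟩ ≤ 0 for all x ∈ ∂C. Then there exists z ∈ C with f(z) = 0. -/
open scoped RealInnerProductSpace

/-!
By Brouwer's theorem applied to `x ↦ P (x + f x)`, where `P` is the metric projection onto `C`,
some `x ∈ C` has `f x` as an outer normal of `C` at `x`. Fix an interior point `x₀`. For `ε > 0`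
the field `f y + ε • (x₀ - y)` points strictly into `C` with respect to the given normals, uniformly
along the boundary, so by continuity its value `v` at `x` makes a negative product with the normal
at every boundary point near `x`. A short segment in direction `v` that starts at an interior point
near `x` therefore cannot leave `C`, and `x + t • v ∈ C` for some `t > 0`. Since `f x` is an outer
normal at `x`, this gives `⟪v, f x⟫ ≤ 0`, and `ε → 0` yields `‖f x‖² ≤ 0`.

Brouwer's theorem comes from a change of variables. If a Lipschitz map `h` vanishes off `s`, then
`∫ x in s, det (1 + t • h' x)` is a polynomial in `t`; for small `t` the map `id + t • h` permutes
`s`, so the polynomial is constantly `μ s`. If `r` were a `C¹` retraction of a ball onto its sphere,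
then `h = r - id` would make the integrand vanish at `t = 1`.
-/

section Determinant

open Polynomial Metric

lemma exists_polynomial_eval_eq_det_one_add_smul {R M : Type*} [CommRing R] [Nontrivial R]
    [AddCommGroup M] [Module R M] [Module.Free R M] [Module.Finite R M] (A : M →ₗ[R] M) :
    ∃ p : R[X], p.natDegree ≤ Module.finrank R M ∧
      ∀ t, p.eval t = LinearMap.det (1 + t • A) := by
  classical
  let b := Module.finBasis R M
  let matA := LinearMap.toMatrix b b A
  refine ⟨((X : R[X]) • matA.map C + (1 : Matrix _ _ R).map C).det, ?_, fun t ↦ ?_⟩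
  · simpa using natDegree_det_X_add_C_le matA 1
  · rw [← coe_evalRingHom, RingHom.map_det, ← LinearMap.det_toMatrix b]
    congr 1
    ext i j
    simp [matA, LinearMap.toMatrix_one, Matrix.one_apply, apply_ite, mul_comm t, add_comm]

lemma det_one_add_pos_of_norm_lt_one {E : Type*} [NormedAddCommGroup E] [NormedSpace ℝ E]
    [FiniteDimensional ℝ E] {A : E →L[ℝ] E} (hA : ‖A‖ < 1) : 0 < (1 + A).det := by
  have det_ne_zero : ∀ B ∈ ball (0 : E →L[ℝ] E) 1, (1 + B).det ≠ 0 := by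
    intro B hB
    have : CompleteSpace E := FiniteDimensional.complete ℝ E
    have hunit : IsUnit (1 - -B) :=
      isUnit_one_sub_of_norm_lt_one (by simpa using hB)
    rw [sub_neg_eq_add] at hunit
    exact ((hunit.map ContinuousLinearMap.toLinearMapRingHom).map LinearMap.det).ne_zero
  have hcont : ContinuousOn (fun B : E →L[ℝ] E ↦ (1 + B).det) (ball 0 1) :=
    (ContinuousLinearMap.continuous_det.comp (by fun_prop)).continuousOn
  by_contra! hneg
  obtain ⟨B, hB, hB0⟩ := (convex_ball (0 : E →L[ℝ] E) 1).isPreconnected.intermediate_value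
    (by simpa using hA) (mem_ball_self one_pos) hcont
    ⟨hneg, by simp [ContinuousLinearMap.det]⟩
  exact det_ne_zero B hB hB0

end Determinant

section ChangeOfVariables

open MeasureTheory Polynomial Set Function Metric
open scoped NNReal

lemma exists_polynomial_eval_eq_integral {𝕜 X : Type*} [RCLike 𝕜] [MeasurableSpace X]
    {μ : Measure X} {p : X → 𝕜[X]} {n : ℕ} (hdeg : ∀ x, (p x).natDegree ≤ n)
    (hint : ∀ t, Integrable (fun x ↦ (p x).eval t) μ) :
    ∃ q : 𝕜[X], ∀ t, q.eval t = ∫ x, (p x).eval t ∂μ := by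
  let nodes := Finset.range (n + 1)
  let basis (i : ℕ) : 𝕜[X] := Lagrange.basis nodes (Nat.cast : ℕ → 𝕜) i
  have hp (x : X) (t : 𝕜) : (p x).eval t = ∑ i ∈ nodes, (p x).eval (i : 𝕜) * (basis i).eval t := by
    have hlt : (p x).degree < nodes.card :=
      (degree_le_of_natDegree_le (hdeg x)).trans_lt <| by
        rw [Finset.card_range]
        exact_mod_cast n.lt_succ_self
    have := congr_arg (Polynomial.eval t) (Lagrange.eq_interpolate (v := (Nat.cast : ℕ → 𝕜))
      Nat.cast_injective.injOn hlt)
    simpa [Lagrange.interpolate_apply, eval_finsetSum, basis] using this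
  refine ⟨∑ i ∈ nodes, C (∫ x, (p x).eval (i : 𝕜) ∂μ) * basis i, fun t ↦ ?_⟩
  calc (∑ i ∈ nodes, C (∫ x, (p x).eval (i : 𝕜) ∂μ) * basis i).eval t
      = ∑ i ∈ nodes, ∫ x, (p x).eval (i : 𝕜) * (basis i).eval t ∂μ := by
        simp [eval_finsetSum, integral_mul_const]
    _ = ∫ x, (p x).eval t ∂μ := by
        simp_rw [hp _ t]
        exact (integral_finsetSum _ fun i _ ↦ (hint _).mul_const _).symm

variable {E : Type*} [NormedAddCommGroup E] [NormedSpace ℝ E] {g h : E → E} {c L : ℝ≥0} {s : Set E}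

lemma bijective_id_add_of_lipschitzWith [CompleteSpace E] (hg : LipschitzWith c g) (hc : c < 1) :
    Bijective fun x ↦ x + g x := by
  have happrox : ApproximatesLinearOn (fun x ↦ x + g x)
      (ContinuousLinearEquiv.refl ℝ E : E →L[ℝ] E) univ c := by
    rw [ApproximatesLinearOn.approximatesLinearOn_iff_lipschitzOnWith, lipschitzOnWith_univ]
    simpa [Pi.sub_def] using hg
  have hnorm : Subsingleton E ∨
      c < ‖((ContinuousLinearEquiv.refl ℝ E).symm : E →L[ℝ] E)‖₊⁻¹ := by
    rcases subsingleton_or_nontrivial E with hE | hE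
    · exact .inl hE
    · exact .inr (by simpa using hc)
  exact ⟨injOn_univ.1 (happrox.injOn hnorm), happrox.surjective hnorm⟩

lemma bijOn_id_add_of_lipschitzWith [CompleteSpace E] (hg : LipschitzWith c g) (hc : c < 1)
    (hgs : ∀ x ∉ s, g x = 0) : BijOn (fun x ↦ x + g x) s s := by
  have hcompl : BijOn (fun x ↦ x + g x) sᶜ sᶜ :=
    (bijOn_id sᶜ).congr fun x hx ↦ by simp [hgs x hx]
  simpa using hcompl.compl (bijective_id_add_of_lipschitzWith hg hc)

variable [FiniteDimensional ℝ E] [MeasurableSpace E] [BorelSpace E] {μ : Measure E}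

lemma integrableOn_det_one_add_smul_fderiv (hh : LipschitzWith L h) (hs : μ s ≠ ⊤) (t : ℝ) :
    IntegrableOn (fun x ↦ (1 + t • fderiv ℝ h x).det) s μ := by
  have : ProperSpace (E →L[ℝ] E) := FiniteDimensional.proper ℝ _
  have hdet : Continuous fun A : E →L[ℝ] E ↦ (1 + t • A).det :=
    ContinuousLinearMap.continuous_det.comp (by fun_prop)
  obtain ⟨M, hM⟩ := (isCompact_closedBall (0 : E →L[ℝ] E) L).exists_bound_of_continuousOn
    hdet.continuousOn
  have : CompleteSpace E := FiniteDimensional.complete ℝ E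
  refine Measure.integrableOn_of_bounded (M := M) hs
    (hdet.measurable.comp (measurable_fderiv ℝ h)).aestronglyMeasurable (.of_forall fun x ↦ ?_)
  exact hM _ (by simpa using norm_fderiv_le_of_lipschitz ℝ hh)

variable [μ.IsAddHaarMeasure]

lemma setIntegral_det_one_add_fderiv_of_lt_one (hg : LipschitzWith c g) (hc : c < 1)
    (hs : MeasurableSet s) (hgs : ∀ x ∉ s, g x = 0) (hd : ∀ x ∈ s, DifferentiableAt ℝ g x) :
    ∫ x in s, (1 + fderiv ℝ g x).det ∂μ = μ.real s := by
  have : CompleteSpace E := FiniteDimensional.complete ℝ E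
  have hbij : BijOn (fun x ↦ x + g x) s s := bijOn_id_add_of_lipschitzWith hg hc hgs
  have hderiv : ∀ x ∈ s, HasFDerivWithinAt (fun x ↦ x + g x) (1 + fderiv ℝ g x) s x := fun x hx ↦
    ((hasFDerivAt_id x).add (hd x hx).hasFDerivAt).hasFDerivWithinAt
  have hpos (x : E) : 0 < (1 + fderiv ℝ g x).det :=
    det_one_add_pos_of_norm_lt_one <|
      (norm_fderiv_le_of_lipschitz ℝ hg).trans_lt (mod_cast hc)
  calc ∫ x in s, (1 + fderiv ℝ g x).det ∂μ
      = ∫ x in s, |(1 + fderiv ℝ g x).det| • (1 : ℝ) ∂μ := by simp [abs_of_pos (hpos _)]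
    _ = ∫ _ in (fun x ↦ x + g x) '' s, (1 : ℝ) ∂μ :=
      (integral_image_eq_integral_abs_det_fderiv_smul μ hs hderiv hbij.injOn fun _ ↦ (1 : ℝ)).symm
    _ = μ.real s := by simp [hbij.image_eq]

theorem setIntegral_det_one_add_fderiv (hh : LipschitzWith L h) (hs : MeasurableSet s)
    (hμs : μ s ≠ ⊤) (hhs : ∀ x ∉ s, h x = 0) (hd : ∀ x ∈ s, DifferentiableAt ℝ h x) :
    ∫ x in s, (1 + fderiv ℝ h x).det ∂μ = μ.real s := by
  choose p hpdeg hp using fun x ↦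
    exists_polynomial_eval_eq_det_one_add_smul (fderiv ℝ h x : E →ₗ[ℝ] E)
  replace hp (x : E) (t : ℝ) : (p x).eval t = (1 + t • fderiv ℝ h x).det := hp x t
  obtain ⟨q, hq⟩ := exists_polynomial_eval_eq_integral (μ := μ.restrict s) hpdeg fun t ↦ by
    simp_rw [hp]
    exact integrableOn_det_one_add_smul_fderiv hh hμs t
  simp_rw [hp] at hq
  have hsmall : ∀ t ∈ Ioo 0 ((L : ℝ) + 1)⁻¹, q.eval t = μ.real s := by
    intro t ht
    have hLip : LipschitzWith (‖t‖₊ * L) (t • h) := (lipschitzWith_smul t).comp hh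
    have hlt : ‖t‖₊ * L < 1 := by
      rw [← NNReal.coe_lt_coe, NNReal.coe_mul, coe_nnnorm, Real.norm_of_nonneg ht.1.le]
      calc t * L ≤ t * (L + 1) := by gcongr; exacts [ht.1.le, by simp]
        _ < 1 := by
          rw [← lt_div_iff₀ (by positivity), one_div]
          exact ht.2
    rw [hq, ← setIntegral_det_one_add_fderiv_of_lt_one hLip hlt hs
      (fun x hx ↦ by simp [hhs x hx]) fun x hx ↦ (hd x hx).const_smul t]
    simp [fderiv_const_smul_field]
  have hconst : q = C (μ.real s) :=
    eq_of_infinite_eval_eq q _ <|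
      (Ioo_infinite (show 0 < ((L : ℝ) + 1)⁻¹ by positivity)).mono fun t ht ↦ by
        simpa using hsmall t ht
  simpa [hconst] using (hq 1).symm

end ChangeOfVariables
section OuterNormal

open Set Filter Metric
open scoped Topology NNReal

variable {E : Type*} [NormedAddCommGroup E] [InnerProductSpace ℝ E] {C : Set E} {ν : E → E}
  {p q v w x x₀ y n : E} {ρ : ℝ}

/-- `n` lies in the normal cone of `C` at `x`. Neither `x ∈ C` nor a normalization of `n` is
required; in particular `0` is an outer normal everywhere. -/
def IsOuterNormal (C : Set E) (x n : E) : Prop :=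
  ∀ u ∈ C, ⟪u - x, n⟫ ≤ 0

namespace IsOuterNormal

lemma mul_norm_le_inner (hn : IsOuterNormal C x n) (hρ : 0 ≤ ρ) (hball : closedBall x₀ ρ ⊆ C) :
    ρ * ‖n‖ ≤ ⟪x - x₀, n⟫ := by
  obtain rfl | hn0 := eq_or_ne n 0
  · simp
  have hmem : x₀ + (ρ / ‖n‖) • n ∈ C := hball <| by
    simp [norm_smul, abs_of_nonneg hρ, hn0]
  calc ρ * ‖n‖ = ⟪(ρ / ‖n‖) • n, n⟫ := by
        rw [real_inner_smul_left, real_inner_self_eq_norm_mul_norm]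
        field_simp
    _ = ⟪x₀ + (ρ / ‖n‖) • n - x, n⟫ + ⟪x - x₀, n⟫ := by
        rw [← inner_add_left]
        congr 1
        abel
    _ ≤ ⟪x - x₀, n⟫ := by linarith [hn _ hmem]

lemma eq_zero_of_mem_interior (hn : IsOuterNormal C x n) (hx : x ∈ interior C) : n = 0 := by
  obtain ⟨ρ, hρ, hball⟩ := nhds_basis_closedBall.mem_iff.1 (mem_interior_iff_mem_nhds.1 hx)
  have hle : ρ * ‖n‖ ≤ 0 := by simpa using hn.mul_norm_le_inner hρ.le hball
  exact norm_le_zero_iff.1 (nonpos_of_mul_nonpos_right hle hρ)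

lemma eq_of_sub_of_mem (h : IsOuterNormal C p (x - p)) (hx : x ∈ C) : p = x :=
  (sub_eq_zero.1 (real_inner_self_nonpos.1 (h x hx))).symm

lemma dist_le_of_sub (hp : p ∈ C) (hq : q ∈ C) (hpx : IsOuterNormal C p (x - p))
    (hqy : IsOuterNormal C q (y - q)) : dist p q ≤ dist x y := by
  have hsq : ‖p - q‖ * ‖p - q‖ ≤ ‖x - y‖ * ‖p - q‖ :=
    calc ‖p - q‖ * ‖p - q‖ = ⟪x - y, p - q⟫ + ⟪q - p, x - p⟫ + ⟪p - q, y - q⟫ := by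
          rw [← real_inner_self_eq_norm_mul_norm, ← neg_sub p q, inner_neg_left,
            real_inner_comm (p - q) (x - y), ← sub_eq_add_neg, ← inner_sub_right,
            ← inner_add_right]
          congr 1
          abel
      _ ≤ ⟪x - y, p - q⟫ := by linarith [hpx q hq, hqy p hp]
      _ ≤ ‖x - y‖ * ‖p - q‖ := real_inner_le_norm _ _
  rw [dist_eq_norm, dist_eq_norm]
  obtain hpq | hpq := (norm_nonneg (p - q)).eq_or_lt
  · exact hpq ▸ norm_nonneg _
  · exact le_of_mul_le_mul_right hsq hpq

end IsOuterNormal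

lemma exists_lipschitzWith_one_proj [CompleteSpace E] (hne : C.Nonempty) (hC : IsClosed C)
    (hconv : Convex ℝ C) :
    ∃ P : E → E, LipschitzWith 1 P ∧ ∀ x, P x ∈ C ∧ IsOuterNormal C (P x) (x - P x) := by
  choose P hPC hPmin using exists_norm_eq_iInf_of_complete_convex hne hC.isComplete hconv
  have hPn (x : E) : IsOuterNormal C (P x) (x - P x) := fun u hu ↦ by
    rw [real_inner_comm]
    exact (norm_eq_iInf_iff_real_inner_le_zero hconv (hPC x)).1 (hPmin x) u hu
  exact ⟨P, .of_dist_le_mul fun x y ↦ by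
    simpa using (hPn x).dist_le_of_sub (hPC x) (hPC y) (hPn y), fun x ↦ ⟨hPC x, hPn x⟩⟩

lemma exists_lipschitzWith_extend_by_zero [CompleteSpace E] {F : Type*} [NormedAddCommGroup F]
    {L : ℝ≥0} {h : E → F} (hne : C.Nonempty) (hC : IsClosed C) (hconv : Convex ℝ C)
    (hh : LipschitzOnWith L h C) (hfr : ∀ x ∈ frontier C, h x = 0) :
    ∃ g : E → F, LipschitzWith L g ∧ EqOn g h C ∧ ∀ x ∉ interior C, g x = 0 := by
  obtain ⟨P, hP, hPC⟩ := exists_lipschitzWith_one_proj hne hC hconv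
  have hPeq {x : E} (hx : x ∈ C) : P x = x := (hPC x).2.eq_of_sub_of_mem hx
  refine ⟨h ∘ P, ?_, fun x hx ↦ congr_arg h (hPeq hx), fun x hx ↦ hfr _ ?_⟩
  · have := hh.comp hP.lipschitzOnWith (s := univ) fun x _ ↦ (hPC x).1
    simpa using this
  · rw [hC.frontier_eq]
    refine ⟨(hPC x).1, fun hint ↦ hx ?_⟩
    have hsub : x - P x = 0 := (hPC x).2.eq_zero_of_mem_interior hint
    rwa [sub_eq_zero.1 hsub]

lemma add_mem_interior_of_forall_inner_neg (hν : ∀ y ∈ frontier C, IsOuterNormal C y (ν y))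
    (hq : q ∈ interior C) (hw : ∀ y ∈ frontier C, y ∈ segment ℝ q (q + w) → ⟪w, ν y⟫ < 0) :
    q + w ∈ interior C := by
  refine (convex_segment q (q + w)).isPreconnected.subset_of_closure_inter_subset isOpen_interior
    ⟨q, left_mem_segment ℝ q _, hq⟩ ?_ (right_mem_segment ℝ q _)
  rintro y ⟨hyC, hyseg⟩
  by_contra hyint
  have hyfr : y ∈ frontier C := ⟨closure_mono interior_subset hyC, hyint⟩
  obtain ⟨s, ⟨hs, -⟩, rfl⟩ := segment_eq_image' ℝ q (q + w) ▸ hyseg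
  have houter := hν _ hyfr q (interior_subset hq)
  have hneg := hw _ hyfr hyseg
  simp only [add_sub_cancel_left, sub_add_cancel_left, inner_neg_left, real_inner_smul_left]
    at houter hneg
  obtain rfl : s = 0 := by nlinarith
  exact hyint (by simpa using hq)

lemma exists_pos_add_smul_mem_closure (hν : ∀ y ∈ frontier C, IsOuterNormal C y (ν y))
    (hx : x ∈ closure (interior C)) (hv : ∀ᶠ y in 𝓝[frontier C] x, ⟪v, ν y⟫ < 0) :
    ∃ t > (0 : ℝ), x + t • v ∈ closure C := by
  obtain ⟨η, hη, hball⟩ := mem_nhdsWithin_iff.1 hv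
  obtain ⟨t, ht, htη⟩ : ∃ t > (0 : ℝ), ‖v‖ * t < η / 2 := exists_pos_mul_lt (half_pos hη) _
  have hmem : ∀ q ∈ ball x (η / 2) ∩ interior C, q + t • v ∈ C := by
    intro q ⟨hqx, hq⟩
    refine interior_subset (add_mem_interior_of_forall_inner_neg hν hq fun y hyfr hy ↦ ?_)
    have hyq : dist y q ≤ ‖v‖ * t := by
      simpa [dist_eq_norm, norm_smul, abs_of_pos ht, mul_comm] using norm_sub_le_of_mem_segment hy
    have hyx : dist y x < η :=
      calc dist y x ≤ dist y q + dist q x := dist_triangle _ _ _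
        _ < η / 2 + η / 2 := add_lt_add (hyq.trans_lt htη) hqx
        _ = η := add_halves η
    rw [real_inner_smul_left]
    exact mul_neg_of_pos_of_neg ht (hball ⟨hyx, hyfr⟩)
  have hxcl : x ∈ closure (ball x (η / 2) ∩ interior C) :=
    isOpen_ball.inter_closure ⟨mem_ball_self (half_pos hη), hx⟩
  exact ⟨t, ht, map_mem_closure (f := fun q ↦ q + t • v) (by fun_prop) hxcl hmem⟩

lemma eventually_inner_neg {s : Set E} {g : E → E} {δ : ℝ} (hδ : 0 < δ)
    (hg : ContinuousWithinAt g s x) (hν0 : ∀ y ∈ s, ν y ≠ 0)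
    (hgν : ∀ y ∈ s, ⟪g y, ν y⟫ ≤ -δ * ‖ν y‖) : ∀ᶠ y in 𝓝[s] x, ⟪g x, ν y⟫ < 0 := by
  filter_upwards [hg (ball_mem_nhds _ hδ), self_mem_nhdsWithin] with y hyδ hys
  have hdist : ‖g x - g y‖ < δ := by simpa [dist_eq_norm_sub'] using hyδ
  calc ⟪g x, ν y⟫ = ⟪g x - g y, ν y⟫ + ⟪g y, ν y⟫ := by rw [← inner_add_left, sub_add_cancel]
    _ ≤ ‖g x - g y‖ * ‖ν y‖ + -δ * ‖ν y‖ := add_le_add (real_inner_le_norm _ _) (hgν y hys)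
    _ < 0 := by nlinarith [norm_pos_iff.2 (hν0 y hys)]

lemma exists_pos_add_smul_add_smul_mem {f : E → E} {ε : ℝ} (hC : IsClosed C) (hconv : Convex ℝ C)
    (hf : ContinuousOn f C) (hν0 : ∀ y ∈ frontier C, ν y ≠ 0)
    (hν : ∀ y ∈ frontier C, IsOuterNormal C y (ν y)) (hfν : ∀ y ∈ frontier C, ⟪f y, ν y⟫ ≤ 0)
    (hx : x ∈ C) (hx₀ : x₀ ∈ interior C) (hε : 0 < ε) :
    ∃ t > (0 : ℝ), x + t • (f x + ε • (x₀ - x)) ∈ C := by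
  obtain ⟨ρ, hρ, hball⟩ := nhds_basis_closedBall.mem_iff.1 (mem_interior_iff_mem_nhds.1 hx₀)
  have hstrict : ∀ y ∈ frontier C, ⟪f y + ε • (x₀ - y), ν y⟫ ≤ -(ε * ρ) * ‖ν y‖ := fun y hy ↦
    calc ⟪f y + ε • (x₀ - y), ν y⟫ = ⟪f y, ν y⟫ - ε * ⟪y - x₀, ν y⟫ := by
          rw [inner_add_left, real_inner_smul_left, ← neg_sub y x₀, inner_neg_left]
          ring
      _ ≤ 0 - ε * (ρ * ‖ν y‖) := by
          gcongr
          exacts [hfν y hy, (hν y hy).mul_norm_le_inner hρ.le hball]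
      _ = -(ε * ρ) * ‖ν y‖ := by ring
  have hcont : ContinuousWithinAt (fun y ↦ f y + ε • (x₀ - y)) (frontier C) x :=
    ((hf x hx).mono hC.frontier_subset).add (by fun_prop)
  have hcl : x ∈ closure (interior C) := by
    rw [hconv.closure_interior_eq_closure_of_nonempty_interior ⟨x₀, hx₀⟩]
    exact subset_closure hx
  simpa only [hC.closure_eq] using exists_pos_add_smul_mem_closure hν hcl
    (eventually_inner_neg (mul_pos hε hρ) hcont hν0 hstrict)

end OuterNormal

section FixedPoint

open Set Filter Metric MeasureTheory Function
open scoped Topology NNReal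

variable {E : Type*} [NormedAddCommGroup E] [InnerProductSpace ℝ E] [FiniteDimensional ℝ E]

lemma det_fderiv_eq_zero_of_eventually_norm_eq {r : E → E} {c : ℝ} {x : E} (hc : c ≠ 0)
    (hr : DifferentiableAt ℝ r x) (hnorm : ∀ᶠ y in 𝓝 x, ‖r y‖ = c) : (fderiv ℝ r x).det = 0 := by
  by_contra hdet
  have hzero : 2 • (innerSL ℝ (r x)).comp (fderiv ℝ r x) = 0 :=
    hr.hasFDerivAt.norm_sq.unique <|
      (hasFDerivAt_const (c ^ 2) x).congr_of_eventuallyEq <| hnorm.mono fun y hy ↦ by simp [hy]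
  obtain ⟨v, hv⟩ := (LinearMap.equivOfDetNeZero (fderiv ℝ r x : E →ₗ[ℝ] E) hdet).surjective (r x)
  replace hv : fderiv ℝ r x v = r x := hv
  have hrx : r x = 0 := by simpa [hv] using DFunLike.congr_fun hzero v
  exact hc (by simpa [hrx] using hnorm.self_of_nhds.symm)

lemma exists_det_fderiv_ne_zero {K : Set E} {r : E → E} (hK : IsCompact K) (hconv : Convex ℝ K)
    (hint : (interior K).Nonempty) (hr : ContDiffOn ℝ 1 r K) (hfr : ∀ x ∈ frontier K, r x = x) :
    ∃ x ∈ interior K, (fderiv ℝ r x).det ≠ 0 := by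
  by_contra! hdet
  borelize E
  have : CompleteSpace E := FiniteDimensional.complete ℝ E
  obtain ⟨L, hL⟩ := (hr.sub contDiffOn_id).exists_lipschitzOnWith one_ne_zero hconv hK
  obtain ⟨g, hg, hgK, hg0⟩ := exists_lipschitzWith_extend_by_zero (hint.mono interior_subset)
    hK.isClosed hconv hL fun x hx ↦ by simp [hfr x hx]
  have hgderiv : ∀ x ∈ interior K, HasFDerivAt g (fderiv ℝ r x - 1) x := fun x hx ↦ by
    have hKx : K ∈ 𝓝 x := mem_interior_iff_mem_nhds.1 hx
    have hrx := ((hr.contDiffAt hKx).differentiableAt one_ne_zero).hasFDerivAt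
    exact (hrx.sub (hasFDerivAt_id x)).congr_of_eventuallyEq (hgK.eventuallyEq_of_mem hKx)
  have hvol : volume (interior K) ≠ ⊤ :=
    measure_ne_top_of_subset interior_subset hK.measure_ne_top
  have hzero : volume.real (interior K) = 0 :=
    calc volume.real (interior K)
        = ∫ x in interior K, (1 + fderiv ℝ g x).det :=
          (setIntegral_det_one_add_fderiv hg isOpen_interior.measurableSet hvol hg0
            fun x hx ↦ (hgderiv x hx).differentiableAt).symm
      _ = ∫ x in interior K, (fderiv ℝ r x).det :=
          setIntegral_congr_fun isOpen_interior.measurableSet fun x hx ↦ by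
            simp [(hgderiv x hx).fderiv]
      _ = 0 := setIntegral_eq_zero_of_forall_eq_zero hdet
  exact (ENNReal.toReal_pos (isOpen_interior.measure_pos volume hint).ne' hvol).ne' hzero

lemma exists_eq_zero_of_eqOn_sphere_id {F : E → E} {R : ℝ} (hR : 0 < R)
    (hF : ContDiffOn ℝ 1 F (closedBall 0 R)) (hFid : ∀ x ∈ sphere 0 R, F x = x) :
    ∃ x ∈ closedBall 0 R, F x = 0 := by
  by_contra! hF0
  let r (x : E) : E := (R / ‖F x‖) • F x
  have hr : ContDiffOn ℝ 1 r (closedBall 0 R) :=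
    (contDiffOn_const.div (hF.norm ℝ hF0) fun x hx ↦ norm_ne_zero_iff.2 (hF0 x hx)).smul hF
  have hfr : ∀ x ∈ frontier (closedBall 0 R), r x = x := fun x hx ↦ by
    rw [frontier_closedBall 0 hR.ne'] at hx
    simp [r, hFid x hx, mem_sphere_zero_iff_norm.1 hx, hR.ne']
  have hnorm : ∀ x ∈ closedBall 0 R, ‖r x‖ = R := fun x hx ↦ by
    simp [r, norm_smul, abs_of_pos hR, hF0 x hx]
  obtain ⟨x, hx, hdet⟩ := exists_det_fderiv_ne_zero (isCompact_closedBall 0 R)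
    (convex_closedBall 0 R) ⟨0, ball_subset_interior_closedBall (mem_ball_self hR)⟩ hr hfr
  have hnhds : closedBall 0 R ∈ 𝓝 x := mem_interior_iff_mem_nhds.1 hx
  exact hdet <| det_fderiv_eq_zero_of_eventually_norm_eq hR.ne'
    ((hr.contDiffAt hnhds).differentiableAt one_ne_zero) (mem_of_superset hnhds hnorm)

lemma exists_isFixedPt_of_contDiff {h : E → E} {R : ℝ} (hh : ContDiff ℝ 1 h)
    (hR : ∀ x, ‖h x‖ ≤ R) : ∃ x, IsFixedPt h x := by
  have hR0 : 0 ≤ R := (norm_nonneg _).trans (hR 0)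
  let χ : ContDiffBump (0 : E) := ⟨R + 1, R + 2, by positivity, by linarith⟩
  obtain ⟨x, -, hx⟩ := exists_eq_zero_of_eqOn_sphere_id (F := fun x ↦ x - χ x • h x)
    (R := R + 2) (by positivity) (contDiff_id.sub (χ.contDiff.smul hh)).contDiffOn fun x hx ↦ by
      simp [χ.zero_of_le_dist (x := x) (mem_sphere.1 hx).ge]
  have hxh : x = χ x • h x := sub_eq_zero.1 hx
  have hxR : ‖x‖ ≤ R :=
    calc ‖x‖ = χ x * ‖h x‖ := by
          conv_lhs => rw [hxh, norm_smul, Real.norm_of_nonneg χ.nonneg]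
      _ ≤ R := (mul_le_of_le_one_left (norm_nonneg _) χ.le_one).trans (hR x)
  have hχ : χ x = 1 := χ.one_of_mem_closedBall <| mem_closedBall_zero_iff.2 <|
    hxR.trans (lt_add_one R).le
  exact ⟨x, by simpa [IsFixedPt, hχ] using hxh.symm⟩

lemma exists_isFixedPt_of_continuous {h : E → E} {R : ℝ} (hh : Continuous h)
    (hR : ∀ x, ‖h x‖ ≤ R) : ∃ x, IsFixedPt h x := by
  have hR0 : 0 ≤ R := (norm_nonneg _).trans (hR 0)
  have happrox : ∀ δ > 0, ∃ x ∈ closedBall (0 : E) (R + 1), dist (h x) x < δ := by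
    intro δ hδ
    obtain ⟨k, hk, hkh, -⟩ := hh.exists_contDiff_approx 1 continuous_const
      fun _ ↦ lt_min hδ one_pos
    have hkR (x : E) : ‖k x‖ ≤ R + 1 :=
      calc ‖k x‖ ≤ ‖h x‖ + ‖k x - h x‖ := norm_le_insert' _ _
        _ ≤ R + 1 := by
          rw [← dist_eq_norm]
          exact add_le_add (hR x) ((hkh x).le.trans (min_le_right _ _))
    obtain ⟨x, hx⟩ := exists_isFixedPt_of_contDiff hk hkR
    have hkx := hkh x
    rw [hx.eq, dist_comm] at hkx
    exact ⟨x, mem_closedBall_zero_iff.2 (hx.eq ▸ hkR x), hkx.trans_le (min_le_left _ _)⟩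
  obtain ⟨x, -, hx⟩ := (isCompact_closedBall (0 : E) (R + 1)).exists_isMinOn
    (nonempty_closedBall.2 (by positivity)) (hh.dist continuous_id).continuousOn
  refine ⟨x, dist_le_zero.1 (le_of_forall_pos_le_add fun δ hδ ↦ ?_)⟩
  obtain ⟨y, hy, hyδ⟩ := happrox δ hδ
  simpa using (hx hy).trans hyδ.le

variable {K : Set E}

theorem exists_isFixedPt_of_mapsTo {g : E → E} (hne : K.Nonempty) (hK : IsCompact K)
    (hconv : Convex ℝ K) (hg : ContinuousOn g K) (hgK : MapsTo g K K) :
    ∃ x ∈ K, IsFixedPt g x := by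
  have : CompleteSpace E := FiniteDimensional.complete ℝ E
  obtain ⟨P, hP, hPK⟩ := exists_lipschitzWith_one_proj hne hK.isClosed hconv
  obtain ⟨R, hR⟩ := hK.isBounded.exists_norm_le
  obtain ⟨x, hx⟩ := exists_isFixedPt_of_continuous
    (hg.comp_continuous hP.continuous fun x ↦ (hPK x).1) fun x ↦ hR _ (hgK (hPK x).1)
  have hxK : x ∈ K := hx.eq ▸ hgK (hPK x).1
  refine ⟨x, hxK, ?_⟩
  simpa [IsFixedPt, (hPK x).2.eq_of_sub_of_mem hxK] using hx

theorem exists_isOuterNormal_of_continuousOn {f : E → E} (hne : K.Nonempty) (hK : IsCompact K)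
    (hconv : Convex ℝ K) (hf : ContinuousOn f K) : ∃ x ∈ K, IsOuterNormal K x (f x) := by
  have : CompleteSpace E := FiniteDimensional.complete ℝ E
  obtain ⟨P, hP, hPK⟩ := exists_lipschitzWith_one_proj hne hK.isClosed hconv
  obtain ⟨x, hxK, hx⟩ := exists_isFixedPt_of_mapsTo (g := fun x ↦ P (x + f x)) hne hK hconv
    (hP.continuous.comp_continuousOn (continuousOn_id.add hf)) fun x _ ↦ (hPK _).1
  have hnormal := (hPK (x + f x)).2
  exact ⟨x, hxK, by simpa only [hx.eq, add_sub_cancel_left] using hnormal⟩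

end FixedPoint

theorem zero_of_field_convex_some_outer_normal_field_general {E : Type*} [NormedAddCommGroup E]
    [InnerProductSpace ℝ E] [FiniteDimensional ℝ E] {C : Set E} (hC : IsClosed C)
    (hbdd : Bornology.IsBounded C) (hconv : Convex ℝ C) (hint : (interior C).Nonempty)
    {f ν : E → E} (hf : ContinuousOn f C) (hν0 : ∀ x ∈ frontier C, ν x ≠ 0)
    (hν : ∀ x ∈ frontier C, IsOuterNormal C x (ν x)) (hfν : ∀ x ∈ frontier C, ⟪f x, ν x⟫ ≤ 0) :
    ∃ z ∈ C, f z = 0 := by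
  obtain ⟨x, hxC, hx⟩ := exists_isOuterNormal_of_continuousOn (hint.mono interior_subset)
    (Metric.isCompact_of_isClosed_isBounded hC hbdd) hconv hf
  have ⟨x₀, hx₀⟩ := hint
  have hpert : ∀ ε > (0 : ℝ), ⟪f x, f x⟫ + ε * ⟪x₀ - x, f x⟫ ≤ 0 := by
    intro ε hε
    obtain ⟨t, ht, hmem⟩ :=
      exists_pos_add_smul_add_smul_mem hC hconv hf hν0 hν hfν hxC hx₀ hε
    have hle := hx _ hmem
    rw [add_sub_cancel_left, real_inner_smul_left, inner_add_left, real_inner_smul_left] at hle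
    exact nonpos_of_mul_nonpos_right hle ht
  refine ⟨x, hxC, real_inner_self_nonpos.1 (le_of_not_gt fun hpos ↦ ?_)⟩
  obtain ⟨ε, hε, hlt⟩ := exists_pos_mul_lt hpos (-⟪x₀ - x, f x⟫)
  linarith [hpert ε hε]

/-- If `C ⊆ ℝ^N` is nonempty, closed, bounded, convex with nonempty
interior, `f` is continuous, and there exists an outer normal field `ν` with
`⟪f x, ν x⟫ ≤ 0` on `∂C`, then `f` has a zero in `C`. -/
theorem zero_of_field_convex_some_outer_normal_field
    {N : ℕ} (C : Set (EuclideanSpace ℝ (Fin N)))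
    (hne : C.Nonempty) (hclosed : IsClosed C)
    (hbdd : Bornology.IsBounded C) (hconv : Convex ℝ C)
    (hint : (interior C).Nonempty)
    (f : EuclideanSpace ℝ (Fin N) → EuclideanSpace ℝ (Fin N))
    (hf : Continuous f)
    (hnormal : ∃ ν : EuclideanSpace ℝ (Fin N) → EuclideanSpace ℝ (Fin N),
      (∀ x ∈ frontier C, ‖ν x‖ = 1 ∧ ∀ u ∈ C, ⟪u - x, ν x⟫ ≤ 0) ∧
      ∀ x ∈ frontier C, ⟪f x, ν x⟫ ≤ 0) :
    ∃ z ∈ C, f z = 0 := by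
  obtain ⟨ν, hν, hfν⟩ := hnormal
  exact zero_of_field_convex_some_outer_normal_field_general hclosed hbdd hconv hint hf.continuousOn
    (fun x hx ↦ norm_ne_zero_iff.1 (by simp [(hν x hx).1])) (fun x hx ↦ (hν x hx).2) hfν
end

section
/- Let Ω ⊆ ℝ^N be open, f : [0,T] × Ω → ℝ^N continuous, and G an open bounded set with cl(G) ⊆ Ω. Suppose there is a family (V_u)_{u∈∂G} of bounding functions for G such that for each u ∈ ∂G there exists ρ_u ∈ (0, r_u] with ⟨f(t,x), ∇V_u(x)⟩ ≤ 0 for all x ∈ G ∩ B(u, ρ_u) and all t ∈ [0,T]. Assume moreover that cl(G) is homeomorphic to a closed ball of ℝ^N and that solutions of the Cauchy problems for ẏ = f(t,y) with initial value in cl(G) are unique (i.e. any two solutions defined on a common subinterval of [0,T] that agree at one point of the interval and take values in cl(G) coincide on that interval). Then there exists a differentiable y : [0,T] → Ω with y'(t) = f(t, y(t)) for all t ∈ [0,T], y(0) = y(T), and y(t) ∈ cl(G) for all t ∈ [0,T]. -/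
open Set Metric
open scoped RealInnerProductSpace

/-!
By Peano's theorem a curve starts at every point of `G`. It cannot leave `G`: at a first exit point
`u` the function `t ↦ V_u (y t)` would increase to `0` from negative values, while the sign of
`⟨f, ∇V_u⟩` forces it to be nonincreasing. A compactness argument (Kamke) gives solutions in `cl G`
starting on the boundary as well, and, with uniqueness, the continuity of the Poincaré map
`y 0 ↦ y T` of `cl G`, whose fixed points are the periodic solutions. Since `cl G` is homeomorphic
to a ball, Brouwer's theorem provides one.

Brouwer's theorem follows the Milnor–Rogers argument. For a `C¹` retraction `s` of the ball onto
the sphere, write `s = id + φ`. For small `t` the map `id + tφ` is a bijection of the ball, so the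
integral of its Jacobian, a polynomial in `t`, is the volume of the ball; hence so it is at `t = 1`,
where the Jacobian vanishes because `s` takes values in the sphere.
-/

section Brouwer
open Filter Function MeasureTheory Polynomial Topology
open scoped NNReal

lemma exists_polynomial_eval_eq_det_add_smul {R M : Type*} [CommRing R] [Nontrivial R]
    [AddCommGroup M] [Module R M] [Module.Free R M] [Module.Finite R M] (f g : M →ₗ[R] M) :
    ∃ p : R[X], p.natDegree ≤ Module.finrank R M ∧
      ∀ t, p.eval t = LinearMap.det (f + t • g) := by
  let b := Module.finBasis R M
  let toMat := LinearMap.toMatrix b b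
  refine ⟨Matrix.det ((X : R[X]) • (toMat g).map C + (toMat f).map C), ?_, fun t ↦ ?_⟩
  · simpa using natDegree_det_X_add_C_le (toMat g) (toMat f)
  · rw [← LinearMap.det_toMatrix b, ← coe_evalRingHom, RingHom.map_det]
    congr 1
    ext i j
    simp [toMat, add_comm, mul_comm t]

lemma integral_eval_eq_of_forall_mem_infinite {α : Type*} [MeasurableSpace α] {μ : Measure α}
    {p : α → ℝ[X]} {n : ℕ} {S : Set ℝ} {c : ℝ} (hp : ∀ x, (p x).natDegree ≤ n)
    (hS : S.Infinite) (hint : ∀ t ∈ S, Integrable (fun x ↦ (p x).eval t) μ)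
    (hc : ∀ t ∈ S, ∫ x, (p x).eval t ∂μ = c) (t : ℝ) :
    ∫ x, (p x).eval t ∂μ = c := by
  obtain ⟨s, hsS, hs⟩ := hS.exists_subset_card_eq (n + 1)
  have hsum : ∑ i ∈ s, (Lagrange.basis s id i).eval t = 1 := by
    rw [← eval_finsetSum, Lagrange.sum_basis injective_id.injOn (Finset.card_pos.1 (by lia)),
      eval_one]
  have hinterp : ∀ x, (p x).eval t = ∑ i ∈ s, (p x).eval i * (Lagrange.basis s id i).eval t := by
    intro x
    have hdeg : (p x).degree < s.card := degree_le_natDegree.trans_lt (by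
      exact_mod_cast (hp x).trans_lt (by lia))
    conv_lhs => rw [Lagrange.eq_interpolate injective_id.injOn hdeg, Lagrange.interpolate_apply]
    simp [eval_finsetSum]
  calc ∫ x, (p x).eval t ∂μ
      = ∑ i ∈ s, (∫ x, (p x).eval i ∂μ) * (Lagrange.basis s id i).eval t := by
        simp_rw [hinterp]
        rw [integral_finsetSum _ fun i hi ↦ (hint i (hsS hi)).mul_const _]
        simp_rw [integral_mul_const]
    _ = c := by
        rw [Finset.sum_congr rfl fun i hi ↦ by rw [hc i (hsS hi)], ← Finset.mul_sum, hsum, mul_one]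

lemma exists_mem_frontier_of_isPreconnected {X : Type*} [TopologicalSpace X] {s t : Set X}
    (ht : IsPreconnected t) {x y : X} (hxt : x ∈ t) (hxs : x ∈ s) (hyt : y ∈ t) (hys : y ∉ s) :
    ∃ z ∈ t, z ∈ frontier s := by
  by_contra! h
  have hcover : t ⊆ interior s ∪ interior sᶜ := fun z hz ↦ by
    by_contra hzc
    rw [interior_compl, mem_union, mem_compl_iff, not_or, not_not] at hzc
    exact h z hz ⟨hzc.2, hzc.1⟩
  have hdisj : Disjoint (interior s) (interior sᶜ) :=
    disjoint_compl_right.mono interior_subset interior_subset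
  have hx : x ∈ interior s := (hcover hxt).resolve_right fun hx ↦ interior_subset hx hxs
  exact hys (interior_subset (ht.subset_left_of_subset_union isOpen_interior isOpen_interior hdisj
    hcover ⟨x, hxt, hx⟩ hyt))

lemma lipschitzWith_indicator_of_frontier {E F : Type*} [NormedAddCommGroup E] [NormedSpace ℝ E]
    [NormedAddCommGroup F] {K : ℝ≥0} {s : Set E} {φ : E → F} (hs : IsClosed s)
    (hφ : LipschitzOnWith K φ s) (h0 : ∀ x ∈ frontier s, φ x = 0) :
    LipschitzWith K (s.indicator φ) := by
  have hmixed : ∀ x ∈ s, ∀ y ∉ s, dist (φ x) 0 ≤ K * dist x y := by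
    intro x hx y hy
    obtain ⟨z, hz, hzs⟩ := exists_mem_frontier_of_isPreconnected
      (convex_segment x y).isPreconnected (left_mem_segment ℝ x y) hx (right_mem_segment ℝ x y) hy
    calc dist (φ x) 0 = dist (φ x) (φ z) := by rw [h0 z hzs]
      _ ≤ K * dist x z := hφ.dist_le_mul x hx z (hs.frontier_subset hzs)
      _ ≤ K * dist x y := by
        gcongr
        linarith [dist_add_dist_of_mem_segment hz, dist_nonneg (x := z) (y := y)]
  refine LipschitzWith.of_dist_le_mul fun x y ↦ ?_
  by_cases hx : x ∈ s <;> by_cases hy : y ∈ s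
  · simpa [hx, hy] using hφ.dist_le_mul x hx y hy
  · simpa [hx, hy] using hmixed x hx y hy
  · simpa [hx, hy, dist_comm] using hmixed y hy x hx
  · rw [indicator_of_notMem hx, indicator_of_notMem hy, dist_self]
    positivity

lemma bijective_id_add_of_lipschitzWith_s10 {E : Type*} [NormedAddCommGroup E] [CompleteSpace E]
    {K : ℝ≥0} {φ : E → E} (hφ : LipschitzWith K φ) (hK : K < 1) :
    Bijective fun x ↦ x + φ x := by
  refine (bijective_iff_existsUnique _).2 fun y ↦ ?_
  have hcontr : ContractingWith K fun x ↦ y - φ x :=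
    ⟨hK, LipschitzWith.of_dist_le_mul fun a b ↦ by
      simpa only [dist_sub_left] using hφ.dist_le_mul a b⟩
  have hiff : ∀ x, x + φ x = y ↔ IsFixedPt (fun x ↦ y - φ x) x := fun x ↦ by
    rw [IsFixedPt, sub_eq_iff_eq_add, eq_comm]
  simp_rw [hiff]
  exact ⟨hcontr.fixedPoint, hcontr.fixedPoint_isFixedPt, fun x ↦ hcontr.fixedPoint_unique⟩

lemma image_eq_self_of_eqOn_id_compl {α : Type*} {g : α → α} {s : Set α} (hg : Bijective g)
    (h : EqOn g id sᶜ) : g '' s = s := by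
  rw [← compl_inj_iff, ← image_compl_eq hg, h.image_eq, image_id]

lemma det_id_add_pos_of_norm_lt_one {E : Type*} [NormedAddCommGroup E] [NormedSpace ℝ E]
    [FiniteDimensional ℝ E] {B : E →L[ℝ] E} (hB : ‖B‖ < 1) : 0 < (1 + B).det := by
  have : CompleteSpace E := FiniteDimensional.complete ℝ E
  by_contra! hneg
  have hcont : Continuous fun t : ℝ ↦ (1 + t • B).det :=
    ContinuousLinearMap.continuous_det.comp (by fun_prop)
  obtain ⟨t, ht, hdet⟩ : (0 : ℝ) ∈ (fun t : ℝ ↦ (1 + t • B).det) '' Icc 0 1 :=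
    intermediate_value_Icc' zero_le_one hcont.continuousOn
      ⟨by simpa using hneg, by simp [ContinuousLinearMap.det]⟩
  have hnorm : ‖-(t • B)‖ < 1 := by
    rw [norm_neg, norm_smul, Real.norm_of_nonneg ht.1]
    exact (mul_le_of_le_one_left (norm_nonneg B) ht.2).trans_lt hB
  have hunit : IsUnit (1 + t • B) := by
    simpa using (Units.oneSub (-(t • B)) hnorm).isUnit
  have := (hunit.map ContinuousLinearMap.toLinearMapRingHom).map LinearMap.det
  exact this.ne_zero hdet

lemma setIntegral_det_id_add_of_lipschitzWith {E : Type*} [NormedAddCommGroup E] [NormedSpace ℝ E]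
    [FiniteDimensional ℝ E] [MeasurableSpace E] [BorelSpace E] (μ : Measure E) [μ.IsAddHaarMeasure]
    {U : Set E} (hU : MeasurableSet U) {K : ℝ≥0} (hK : K < 1) {φ : E → E} {φ' : E → E →L[ℝ] E}
    (hφ : LipschitzWith K φ) (h0 : ∀ x ∉ U, φ x = 0) (hφ' : ∀ x ∈ U, HasFDerivAt φ (φ' x) x) :
    ∫ x in U, (1 + φ' x).det ∂μ = μ.real U := by
  have : CompleteSpace E := FiniteDimensional.complete ℝ E
  have hbij := bijective_id_add_of_lipschitzWith_s10 hφ hK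
  have himage : (fun x ↦ x + φ x) '' U = U :=
    image_eq_self_of_eqOn_id_compl hbij fun x hx ↦ by simp [h0 x hx]
  have hderiv : ∀ x ∈ U, HasFDerivWithinAt (fun x ↦ x + φ x) (1 + φ' x) U x := fun x hx ↦
    ((hasFDerivAt_id x).add (hφ' x hx)).hasFDerivWithinAt
  have hdet : ∀ x ∈ U, |(1 + φ' x).det| • (1 : ℝ) = (1 + φ' x).det := fun x hx ↦ by
    rw [smul_eq_mul, mul_one, abs_of_pos (det_id_add_pos_of_norm_lt_one
      (((hφ' x hx).le_of_lipschitz hφ).trans_lt (by exact_mod_cast hK)))]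
  calc ∫ x in U, (1 + φ' x).det ∂μ = ∫ x in U, |(1 + φ' x).det| • (1 : ℝ) ∂μ :=
        (setIntegral_congr_fun hU hdet).symm
    _ = ∫ _ in (fun x ↦ x + φ x) '' U, (1 : ℝ) ∂μ :=
        (integral_image_eq_integral_abs_det_fderiv_smul μ hU hderiv hbij.injective.injOn
          fun _ ↦ (1 : ℝ)).symm
    _ = μ.real U := by simp [himage]

lemma setIntegral_det_id_add_of_lipschitzOnWith {E : Type*} [NormedAddCommGroup E]
    [NormedSpace ℝ E] [FiniteDimensional ℝ E] [MeasurableSpace E] [BorelSpace E] (μ : Measure E)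
    [μ.IsAddHaarMeasure] {C : Set E} (hC : IsClosed C) {K : ℝ≥0} (hK : K < 1) {φ : E → E}
    {φ' : E → E →L[ℝ] E} (hφ : LipschitzOnWith K φ C) (h0 : ∀ x ∈ frontier C, φ x = 0)
    (hφ' : ∀ x ∈ interior C, HasFDerivAt φ (φ' x) x) :
    ∫ x in interior C, (1 + φ' x).det ∂μ = μ.real (interior C) := by
  refine setIntegral_det_id_add_of_lipschitzWith μ isOpen_interior.measurableSet hK
    (lipschitzWith_indicator_of_frontier hC hφ h0) (fun x hx ↦ ?_) fun x hx ↦ ?_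
  · exact indicator_apply_eq_zero.2 fun hxC ↦ h0 x ⟨subset_closure hxC, hx⟩
  · refine (hφ' x hx).congr_of_eventuallyEq ?_
    filter_upwards [mem_interior_iff_mem_nhds.1 hx] with y hy using indicator_of_mem hy φ

lemma setIntegral_det_fderiv_of_eqOn_frontier {E : Type*} [NormedAddCommGroup E] [NormedSpace ℝ E]
    [FiniteDimensional ℝ E] [MeasurableSpace E] [BorelSpace E] (μ : Measure E) [μ.IsAddHaarMeasure]
    {C : Set E} (hC : IsCompact C) (hconv : Convex ℝ C) {s : E → E}
    (hs : ∀ x ∈ C, ContDiffAt ℝ 1 s x) (hid : EqOn s id (frontier C)) :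
    ∫ x in interior C, (fderiv ℝ s x).det ∂μ = μ.real (interior C) := by
  let φ : E → E := fun x ↦ s x - x
  let φ' : E → E →L[ℝ] E := fun x ↦ fderiv ℝ s x - 1
  obtain ⟨K, hK⟩ : ∃ K, LipschitzOnWith K φ C := ContDiffOn.exists_lipschitzOnWith
    (fun x hx ↦ ((hs x hx).sub contDiffAt_id).contDiffWithinAt) one_ne_zero hconv hC
  have hφ0 : ∀ x ∈ frontier C, φ x = 0 := fun x hx ↦ sub_eq_zero.2 (hid hx)
  have hφ' : ∀ x ∈ interior C, HasFDerivAt φ (φ' x) x := fun x hx ↦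
    ((hs x (interior_subset hx)).differentiableAt one_ne_zero).hasFDerivAt.sub (hasFDerivAt_id x)
  have hφ'cont : ContinuousOn φ' C := fun x hx ↦
    (((hs x hx).fderiv_right (m := 0) (by simp)).continuousAt.sub
      continuousAt_const).continuousWithinAt
  choose p hdeg hp using fun x ↦
    exists_polynomial_eval_eq_det_add_smul (1 : E →ₗ[ℝ] E) (φ' x : E →ₗ[ℝ] E)
  replace hp : ∀ t, (fun x ↦ (p x).eval t) = fun x ↦ (1 + t • φ' x).det := fun t ↦
    funext fun x ↦ hp x t
  have hint : ∀ t, Integrable (fun x ↦ (p x).eval t) (μ.restrict (interior C)) := fun t ↦ by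
    rw [hp]
    exact ((ContinuousLinearMap.continuous_det.comp_continuousOn
      (continuousOn_const.add (hφ'cont.const_smul t))).integrableOn_compact hC).mono_set
      interior_subset
  have hsmall : {t : ℝ | ‖t‖₊ * K < 1} ∈ 𝓝 0 :=
    (by fun_prop : Continuous fun t : ℝ ↦ ‖t‖₊ * K).continuousAt.eventually_lt_const (by simp)
  have hvol : ∀ t ∈ {t : ℝ | ‖t‖₊ * K < 1},
      ∫ x in interior C, (p x).eval t ∂μ = μ.real (interior C) := fun t ht ↦ by
    rw [hp]
    exact setIntegral_det_id_add_of_lipschitzOnWith μ hC.isClosed ht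
      ((lipschitzWith_smul t).comp_lipschitzOnWith hK) (fun x hx ↦ by simp [hφ0 x hx])
      fun x hx ↦ (hφ' x hx).const_smul t
  simpa [hp, φ'] using integral_eval_eq_of_forall_mem_infinite hdeg
    (infinite_of_mem_nhds 0 hsmall) (fun t _ ↦ hint t) hvol 1

lemma det_eq_zero_of_norm_eventually_const {E : Type*} [NormedAddCommGroup E]
    [InnerProductSpace ℝ E] [FiniteDimensional ℝ E] {s : E → E} {s' : E →L[ℝ] E} {x : E}
    {c : ℝ} (hs : HasFDerivAt s s' x) (hx : s x ≠ 0) (hc : ∀ᶠ y in 𝓝 x, ‖s y‖ = c) :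
    s'.det = 0 := by
  by_contra hdet
  have hsurj : Surjective s' := ((Module.End.isUnit_iff _).1
    ((LinearMap.isUnit_iff_isUnit_det (s' : E →ₗ[ℝ] E)).2 (isUnit_iff_ne_zero.2 hdet))).2
  obtain ⟨v, hv⟩ := hsurj (s x)
  have hconst : HasFDerivAt (fun y ↦ ⟪s y, s y⟫) (0 : E →L[ℝ] ℝ) x := by
    refine (hasFDerivAt_const (c ^ 2) x).congr_of_eventuallyEq ?_
    filter_upwards [hc] with y hy
    rw [real_inner_self_eq_norm_sq, hy]
  have hzero := DFunLike.congr_fun ((hs.inner ℝ hs).unique hconst) v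
  simp [hv, fderivInnerCLM_apply, hx] at hzero

lemma not_mapsTo_sphere_of_contDiffAt {E : Type*} [NormedAddCommGroup E] [InnerProductSpace ℝ E]
    [FiniteDimensional ℝ E] {s : E → E} (hs : ∀ x ∈ closedBall (0 : E) 1, ContDiffAt ℝ 1 s x)
    (hid : EqOn s id (sphere 0 1)) : ¬ MapsTo s (closedBall 0 1) (sphere 0 1) := by
  borelize E
  intro hmaps
  have hball : ball (0 : E) 1 ⊆ interior (closedBall 0 1) := ball_subset_interior_closedBall
  have hdet : ∀ x ∈ interior (closedBall (0 : E) 1), (fderiv ℝ s x).det = 0 := fun x hx ↦ by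
    have hnorm : ∀ y ∈ closedBall (0 : E) 1, ‖s y‖ = 1 := fun y hy ↦ by simpa using hmaps hy
    have hxC := interior_subset hx
    refine det_eq_zero_of_norm_eventually_const
      ((hs x hxC).differentiableAt one_ne_zero).hasFDerivAt ?_
      (eventually_of_mem (mem_interior_iff_mem_nhds.1 hx) hnorm)
    exact norm_ne_zero_iff.1 (hnorm x hxC ▸ one_ne_zero)
  have hvol := setIntegral_det_fderiv_of_eqOn_frontier volume (isCompact_closedBall (0 : E) 1)
    (convex_closedBall 0 1) hs (hid.mono frontier_closedBall_subset_sphere)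
  rw [setIntegral_congr_fun isOpen_interior.measurableSet hdet, integral_zero] at hvol
  have hpos : 0 < (volume : Measure E).real (interior (closedBall 0 1)) :=
    ENNReal.toReal_pos (isOpen_interior.measure_pos _ ⟨0, hball (by simp)⟩).ne'
      ((isCompact_closedBall _ _).measure_lt_top.trans_le' (measure_mono interior_subset)).ne
  exact hpos.ne hvol

section RayExit

variable {E : Type*} [NormedAddCommGroup E] [InnerProductSpace ℝ E] {x v : E}

/-- The point where the ray issued from `x` in the direction `v` leaves the closed unit ball. For
`v = 0` it is `x`, by the convention on division by zero. -/
noncomputable def rayExit (x v : E) : E :=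
  x + ((-⟪x, v⟫ + √(⟪x, v⟫ ^ 2 + ‖v‖ ^ 2 * (1 - ‖x‖ ^ 2))) / ‖v‖ ^ 2) • v

lemma norm_rayExit (hx : ‖x‖ ≤ 1) (hv : v ≠ 0) : ‖rayExit x v‖ = 1 := by
  set d := ⟪x, v⟫ ^ 2 + ‖v‖ ^ 2 * (1 - ‖x‖ ^ 2) with hd
  have hd0 : 0 ≤ d := by
    have : 0 ≤ 1 - ‖x‖ ^ 2 := sub_nonneg.2 (pow_le_one₀ (norm_nonneg x) hx)
    positivity
  have hv0 : ‖v‖ ≠ 0 := norm_ne_zero_iff.2 hv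
  have hsq : ‖rayExit x v‖ ^ 2 = 1 := by
    rw [rayExit, ← hd, norm_add_sq_real, real_inner_smul_right, norm_smul, mul_pow,
      Real.norm_eq_abs, sq_abs]
    field_simp
    linear_combination Real.sq_sqrt hd0 + hd
  exact (pow_eq_one_iff_of_nonneg (norm_nonneg _) two_ne_zero).1 hsq

lemma rayExit_eq_self (hx : ‖x‖ = 1) (hv : 0 ≤ ⟪x, v⟫) : rayExit x v = x := by
  simp [rayExit, hx, Real.sqrt_sq hv]

lemma contDiffAt_rayExit {n : WithTop ℕ∞} (hv : v ≠ 0)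
    (hd : 0 < ⟪x, v⟫ ^ 2 + ‖v‖ ^ 2 * (1 - ‖x‖ ^ 2)) :
    ContDiffAt ℝ n (fun p : E × E ↦ rayExit p.1 p.2) (x, v) := by
  have hx : ContDiffAt ℝ n (fun p : E × E ↦ p.1) (x, v) := contDiffAt_fst
  have hv' : ContDiffAt ℝ n (fun p : E × E ↦ p.2) (x, v) := contDiffAt_snd
  have hinner := hx.inner ℝ hv'
  have hdisc := (hinner.pow 2).add
    ((hv'.norm_sq ℝ).mul ((contDiffAt_const (c := (1 : ℝ))).sub (hx.norm_sq ℝ)))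
  exact hx.add (((hinner.neg.add (hdisc.sqrt hd.ne')).div (hv'.norm_sq ℝ)
    (by simpa using hv)).smul hv')

lemma contDiffAt_rayExit_of_mem_closedBall {n : WithTop ℕ∞} {y : E} (hx : ‖x‖ ≤ 1) (hy : ‖y‖ ≤ 1)
    (hxy : x ≠ y) : ContDiffAt ℝ n (fun p : E × E ↦ rayExit p.1 p.2) (x, x - y) := by
  refine contDiffAt_rayExit (sub_ne_zero.2 hxy) ?_
  have hpos : 0 < ‖x - y‖ ^ 2 := pow_pos (norm_pos_iff.2 (sub_ne_zero.2 hxy)) 2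
  rcases hx.lt_or_eq with hx | hx
  · have : 0 < 1 - ‖x‖ ^ 2 := by nlinarith [norm_nonneg x]
    positivity
  · have : 0 < ⟪x, x - y⟫ := by
      rw [inner_sub_right, real_inner_self_eq_norm_sq]
      nlinarith [norm_sub_sq_real x y, norm_nonneg y]
    rw [hx]
    positivity

end RayExit

lemma exists_isFixedPt_of_contDiff_s10 {E : Type*} [NormedAddCommGroup E] [InnerProductSpace ℝ E]
    [FiniteDimensional ℝ E] {g : E → E} (hg : ContDiff ℝ 1 g)
    (hmaps : MapsTo g (closedBall 0 1) (closedBall 0 1)) :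
    ∃ x ∈ closedBall 0 1, IsFixedPt g x := by
  by_contra! hfix
  have hne : ∀ x ∈ closedBall (0 : E) 1, x ≠ g x := fun x hx ↦ Ne.symm (hfix x hx)
  have hnorm : ∀ x ∈ closedBall (0 : E) 1, ‖x‖ ≤ 1 ∧ ‖g x‖ ≤ 1 := fun x hx ↦
    ⟨mem_closedBall_zero_iff.1 hx, mem_closedBall_zero_iff.1 (hmaps hx)⟩
  refine not_mapsTo_sphere_of_contDiffAt (s := fun x ↦ rayExit x (x - g x)) (fun x hx ↦ ?_)
    (fun x hx ↦ ?_) (fun x hx ↦ ?_)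
  · exact (contDiffAt_rayExit_of_mem_closedBall (hnorm x hx).1 (hnorm x hx).2 (hne x hx)).comp x
      (contDiffAt_id.prodMk (contDiffAt_id.sub hg.contDiffAt))
  · have hx1 : ‖x‖ = 1 := mem_sphere_zero_iff_norm.1 hx
    refine rayExit_eq_self hx1 ?_
    rw [inner_sub_right, real_inner_self_eq_norm_sq, hx1, one_pow, sub_nonneg]
    have := (hnorm x (sphere_subset_closedBall hx)).2
    calc ⟪x, g x⟫ ≤ ‖x‖ * ‖g x‖ := real_inner_le_norm x (g x)
      _ ≤ 1 := by rwa [hx1, one_mul]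
  · exact mem_sphere_zero_iff_norm.2
      (norm_rayExit (hnorm x hx).1 (sub_ne_zero.2 (hne x hx)))

lemma exists_norm_sub_lt_of_continuous {E : Type*} [NormedAddCommGroup E] [InnerProductSpace ℝ E]
    [FiniteDimensional ℝ E] {g : E → E} (hg : Continuous g) (hle : ∀ x, ‖g x‖ ≤ 1) {ε : ℝ}
    (hε : 0 < ε) : ∃ x ∈ closedBall 0 1, ‖x - g x‖ < ε := by
  set δ := ε / 2 with hδ
  have hδ0 : 0 < δ := half_pos hε
  obtain ⟨h, hh, happrox, -⟩ := hg.exists_contDiff_approx 1 continuous_const fun _ ↦ hδ0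
  have hhg : ∀ x, ‖h x - g x‖ < δ := fun x ↦ by simpa [dist_eq_norm] using happrox x
  have hhle : ∀ x, ‖h x‖ ≤ 1 + δ := fun x ↦
    (norm_le_norm_add_norm_sub' (h x) (g x)).trans (add_le_add (hle x) (hhg x).le)
  obtain ⟨x, hx, hfix⟩ := exists_isFixedPt_of_contDiff_s10 (g := fun x ↦ (1 + δ)⁻¹ • h x)
    (hh.const_smul _) fun x _ ↦ by
      rw [mem_closedBall_zero_iff, norm_smul, Real.norm_of_nonneg (by positivity)]
      exact inv_mul_le_one_of_le₀ (hhle x) (by positivity)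
  refine ⟨x, hx, ?_⟩
  have hhx : h x = (1 + δ) • x := (inv_smul_eq_iff₀ (by positivity)).1 hfix
  calc ‖x - g x‖ = ‖(h x - g x) - δ • x‖ := by rw [hhx, add_smul, one_smul]; congr 1; abel
    _ ≤ ‖h x - g x‖ + ‖δ • x‖ := norm_sub_le _ _
    _ < δ + δ := by
      rw [norm_smul, Real.norm_of_nonneg hδ0.le]
      exact add_lt_add_of_lt_of_le (hhg x)
        (mul_le_of_le_one_right hδ0.le (mem_closedBall_zero_iff.1 hx))
    _ = ε := by rw [hδ, add_halves]

/-- The fixed point property of a topological space: every continuous self-map has a fixed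
point. -/
def HasFixedPointProperty (X : Type*) [TopologicalSpace X] : Prop :=
  ∀ f : C(X, X), ∃ x, IsFixedPt f x

lemma hasFixedPointProperty_of_homeomorph {X Y : Type*} [TopologicalSpace X] [TopologicalSpace Y]
    (e : X ≃ₜ Y) (hY : HasFixedPointProperty Y) : HasFixedPointProperty X := fun f ↦ by
  obtain ⟨y, hy⟩ := hY ((e : C(X, Y)).comp (f.comp (e.symm : C(Y, X))))
  exact ⟨e.symm y, by simpa [IsFixedPt] using congrArg e.symm hy⟩

theorem hasFixedPointProperty_closedBall_zero_one {E : Type*} [NormedAddCommGroup E]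
    [InnerProductSpace ℝ E] [FiniteDimensional ℝ E] :
    HasFixedPointProperty (closedBall (0 : E) 1) := by
  intro f
  have : TietzeExtension (closedBall (0 : E) 1) := instTietzeExtensionUnitClosedBall (𝕜 := ℝ)
  obtain ⟨g, hg⟩ := ContinuousMap.exists_restrict_eq (isClosed_closedBall (x := (0 : E))) f
  have hgcont : Continuous fun x ↦ (g x : E) := continuous_subtype_val.comp g.continuous
  obtain ⟨x, hx, hmin⟩ := (isCompact_closedBall (0 : E) 1).exists_isMinOn ⟨0, by simp⟩
    (continuous_id.sub hgcont).norm.continuousOn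
  refine ⟨⟨x, hx⟩, ?_⟩
  by_contra hfix
  have hgx : x - g x ≠ 0 := fun h ↦ hfix <| by
    rw [← hg]
    exact Subtype.ext (sub_eq_zero.1 h).symm
  obtain ⟨y, hy, hlt⟩ := exists_norm_sub_lt_of_continuous hgcont
    (fun x ↦ mem_closedBall_zero_iff.1 (g x).2) (norm_pos_iff.2 hgx)
  exact hlt.not_ge (hmin hy)

theorem hasFixedPointProperty_of_convex_of_isCompact {E : Type*} [NormedAddCommGroup E]
    [NormedSpace ℝ E] [FiniteDimensional ℝ E] {s : Set E} (hconv : Convex ℝ s) (hs : IsCompact s)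
    (hne : (interior s).Nonempty) : HasFixedPointProperty s := by
  let e := toEuclidean (E := E)
  have hes : IsCompact (e '' s) := hs.image e.continuous
  have hconve : Convex ℝ (e '' s) := hconv.is_linear_image e.toLinearEquiv.isLinear
  have hnee : (interior (e '' s)).Nonempty :=
    (hne.image e).mono (e.toHomeomorph.image_interior s).subset
  obtain ⟨h, -, hh, -⟩ := exists_homeomorph_image_interior_closure_frontier_eq_unitBall hconve
    hnee hes.isBounded
  rw [hes.isClosed.closure_eq] at hh
  exact hasFixedPointProperty_of_homeomorph
    ((e.toHomeomorph.image s).trans ((h.image _).trans (Homeomorph.setCongr hh)))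
    hasFixedPointProperty_closedBall_zero_one

end Brouwer

section IntegralCurves
open Filter Function Topology
open scoped NNReal

lemma isCompact_setOf_lipschitzWith_mapsTo {X Y : Type*} [PseudoMetricSpace X] [MetricSpace Y]
    (M : ℝ≥0) {K : Set Y} (hK : IsCompact K) :
    IsCompact {u : C(X, Y) | LipschitzWith M u ∧ ∀ x, u x ∈ K} := by
  refine ArzelaAscoli.isCompact_of_equicontinuous _ ?_
    (LipschitzWith.uniformEquicontinuous _ M fun u ↦ u.2.1).equicontinuous
  have himage : ContinuousMap.toFun '' {u : C(X, Y) | LipschitzWith M u ∧ ∀ x, u x ∈ K} =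
      univ.pi (fun _ ↦ K) ∩ {u | LipschitzWith M u} := by
    ext u
    constructor
    · rintro ⟨u, hu, rfl⟩
      exact ⟨fun x _ ↦ hu.2 x, hu.1⟩
    · exact fun hu ↦ ⟨⟨u, hu.2.continuous⟩, ⟨hu.2, fun x ↦ hu.1 x trivial⟩, rfl⟩
  rw [himage]
  exact (isCompact_univ_pi fun _ ↦ hK).inter_right (isClosed_setOfPred_lipschitzWith M)

lemma exists_subseq_tendsto_of_lipschitzOnWith {X Y : Type*} [PseudoMetricSpace X] [MetricSpace Y]
    {s : Set X} (hs : IsCompact s) {K : Set Y} (hK : IsCompact K) {M : ℝ≥0} {u : ℕ → X → Y}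
    (hu : ∀ n, LipschitzOnWith M (u n) s) (huK : ∀ n, MapsTo (u n) s K) :
    ∃ v : X → Y, ContinuousOn v s ∧ MapsTo v s K ∧ ∃ φ : ℕ → ℕ, StrictMono φ ∧
      ∀ x ∈ s, Tendsto (fun n ↦ u (φ n) x) atTop (𝓝 (v x)) := by
  have : CompactSpace s := isCompact_iff_compactSpace.1 hs
  have hlip : ∀ n, LipschitzWith M (s.domRestrict (u n)) := fun n ↦
    lipschitzOnWith_iff_restrict.1 (hu n)
  obtain ⟨v, hv, φ, hφ, hlim⟩ := (isCompact_setOf_lipschitzWith_mapsTo (X := s) M hK).tendsto_subseq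
    (x := fun n ↦ ⟨s.domRestrict (u n), (hlip n).continuous⟩) fun n ↦
      ⟨hlip n, fun x ↦ huK n x.2⟩
  have hext : s.domRestrict (extend Subtype.val v (u 0)) = v :=
    extend_comp Subtype.val_injective v (u 0)
  have hext' : ∀ x (hx : x ∈ s), extend Subtype.val v (u 0) x = v ⟨x, hx⟩ := fun x hx ↦
    congr_fun hext ⟨x, hx⟩
  refine ⟨extend Subtype.val v (u 0), ?_, fun x hx ↦ ?_, φ, hφ, fun x hx ↦ ?_⟩
  · rw [continuousOn_iff_continuous_domRestrict, hext]
    exact v.continuous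
  · rw [hext' x hx]
    exact hv.2 _
  · rw [hext' x hx]
    exact ((continuous_eval_const (⟨x, hx⟩ : s)).tendsto v).comp hlim

variable {E : Type*} [NormedAddCommGroup E] [NormedSpace ℝ E] {a b : ℝ} {K : Set E} {M : ℝ≥0}

lemma lipschitzOnWith_of_isIntegralCurveOn {f : ℝ → E → E} {y : ℝ → E} {s : Set ℝ}
    (hs : Convex ℝ s) (hy : IsIntegralCurveOn y f s) (hM : ∀ t ∈ s, ‖f t (y t)‖ ≤ M) :
    LipschitzOnWith M y s :=
  hs.lipschitzOnWith_of_nnnorm_hasDerivWithin_le hy hM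

lemma tendsto_picard {f : ℕ → ℝ → E → E} {g : ℝ → E → E}
    (hK : IsClosed K) (hf : ∀ n, ContinuousOn (uncurry (f n)) (Icc a b ×ˢ K))
    (hfM : ∀ n, ∀ t ∈ Icc a b, ∀ x ∈ K, ‖f n t x‖ ≤ M)
    (hfg : TendstoUniformlyOn (fun n ↦ uncurry (f n)) (uncurry g) atTop (Icc a b ×ˢ K))
    {y : ℕ → ℝ → E} {z : ℝ → E} (hy : ∀ n, ContinuousOn (y n) (Icc a b))
    (hyK : ∀ n, MapsTo (y n) (Icc a b) K)
    (hyz : ∀ t ∈ Icc a b, Tendsto (fun n ↦ y n t) atTop (𝓝 (z t))) {t : ℝ} (ht : t ∈ Icc a b) :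
    Tendsto (fun n ↦ ODE.picard (f n) a (y n a) (y n) t) atTop
      (𝓝 (ODE.picard g a (z a) z t)) := by
  have hsub : uIoc a t ⊆ Icc a b := by
    rw [uIoc_of_le ht.1]
    exact Ioc_subset_Icc_self.trans (Icc_subset_Icc_right ht.2)
  have hg : ContinuousOn (uncurry g) (Icc a b ×ˢ K) := hfg.continuousOn (Frequently.of_forall hf)
  refine (hyz a ⟨le_rfl, ht.1.trans ht.2⟩).add
    (intervalIntegral.tendsto_integral_filter_of_dominated_convergence (fun _ ↦ M)
      (.of_forall fun n ↦ ?_) (.of_forall fun n ↦ .of_forall fun s hs ↦ ?_)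
      intervalIntegrable_const (.of_forall fun s hs ↦ ?_))
  · exact ((ODE.continuousOn_comp (hf n) (hy n) (hyK n)).mono hsub).aestronglyMeasurable
      measurableSet_uIoc
  · exact hfM n s (hsub hs) _ (hyK n (hsub hs))
  · have hzs : z s ∈ K := hK.mem_of_tendsto (hyz s (hsub hs)) (.of_forall fun n ↦ hyK n (hsub hs))
    exact hfg.tendsto_comp (hg (s, z s) ⟨hsub hs, hzs⟩) (tendsto_nhdsWithin_iff.2
      ⟨tendsto_const_nhds.prodMk_nhds (hyz s (hsub hs)),
        .of_forall fun n ↦ ⟨hsub hs, hyK n (hsub hs)⟩⟩)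

theorem exists_subseq_tendsto_isIntegralCurveOn [CompleteSpace E] {f : ℕ → ℝ → E → E}
    {g : ℝ → E → E} (hK : IsCompact K)
    (hf : ∀ n, ContinuousOn (uncurry (f n)) (Icc a b ×ˢ K))
    (hfM : ∀ n, ∀ t ∈ Icc a b, ∀ x ∈ K, ‖f n t x‖ ≤ M)
    (hfg : TendstoUniformlyOn (fun n ↦ uncurry (f n)) (uncurry g) atTop (Icc a b ×ˢ K))
    {y : ℕ → ℝ → E} (hy : ∀ n, IsIntegralCurveOn (y n) (f n) (Icc a b))
    (hyK : ∀ n, MapsTo (y n) (Icc a b) K) :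
    ∃ z, IsIntegralCurveOn z g (Icc a b) ∧ MapsTo z (Icc a b) K ∧ ∃ φ : ℕ → ℕ, StrictMono φ ∧
      ∀ t ∈ Icc a b, Tendsto (fun n ↦ y (φ n) t) atTop (𝓝 (z t)) := by
  obtain ⟨z, hzcont, hzK, φ, hφ, hlim⟩ := exists_subseq_tendsto_of_lipschitzOnWith isCompact_Icc hK
    (fun n ↦ lipschitzOnWith_of_isIntegralCurveOn (convex_Icc a b) (hy n)
      fun t ht ↦ hfM n t ht _ (hyK n ht)) hyK
  have hpicard : ∀ n, ∀ t ∈ Icc a b, ODE.picard (f n) a (y n a) (y n) t = y n t := by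
    intro n t ht
    have hsub : uIcc a t ⊆ Icc a b := by
      rw [uIcc_of_le ht.1]
      exact Icc_subset_Icc_right ht.2
    exact ODE.picard_eq_of_hasDerivAt ((hf n).mono (prod_mono_left hsub)) ((hy n).mono hsub)
      ((hyK n).mono_left hsub)
  have hzpicard : ∀ t ∈ Icc a b, z t = ODE.picard g a (z a) z t := fun t ht ↦ by
    refine tendsto_nhds_unique (hlim t ht) ((tendsto_picard hK.isClosed (fun n ↦ hf (φ n))
      (fun n ↦ hfM (φ n)) (fun u hu ↦ hφ.tendsto_atTop.eventually (hfg u hu))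
      (fun n ↦ (hy (φ n)).continuousOn) (fun n ↦ hyK (φ n)) hlim ht).congr fun n ↦ ?_)
    exact hpicard (φ n) t ht
  refine ⟨z, fun t ht ↦ ?_, hzK, φ, hφ, hlim⟩
  exact (ODE.hasDerivWithinAt_picard_Icc ⟨le_rfl, ht.1.trans ht.2⟩
    (hfg.continuousOn (Frequently.of_forall hf)) hzcont hzK (z a) ht).congr hzpicard
    (hzpicard t ht)

theorem exists_subseq_tendsto_isIntegralCurveOn_of_isCompact [CompleteSpace E] {f : ℝ → E → E}
    (hK : IsCompact K) (hf : ContinuousOn (uncurry f) (Icc a b ×ˢ K)) {y : ℕ → ℝ → E}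
    (hy : ∀ n, IsIntegralCurveOn (y n) f (Icc a b)) (hyK : ∀ n, MapsTo (y n) (Icc a b) K) :
    ∃ z, IsIntegralCurveOn z f (Icc a b) ∧ MapsTo z (Icc a b) K ∧ ∃ φ : ℕ → ℕ, StrictMono φ ∧
      ∀ t ∈ Icc a b, Tendsto (fun n ↦ y (φ n) t) atTop (𝓝 (z t)) := by
  obtain ⟨M, hM⟩ := (isCompact_Icc.prod hK).exists_bound_of_continuousOn hf
  refine exists_subseq_tendsto_isIntegralCurveOn (M := M.toNNReal) hK (fun _ ↦ hf)
    (fun _ t ht x hx ↦ (hM (t, x) ⟨ht, hx⟩).trans (Real.le_coe_toNNReal M)) ?_ hy hyK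
  exact fun u hu ↦ .of_forall fun _ p _ ↦ refl_mem_uniformity hu

lemma continuousOn_of_isIntegralCurveOn_unique [CompleteSpace E] {f : ℝ → E → E}
    (hK : IsCompact K) (hf : ContinuousOn (uncurry f) (Icc a b ×ˢ K)) {Y : E → ℝ → E}
    (hY0 : ∀ x ∈ K, Y x a = x) (hY : ∀ x ∈ K, IsIntegralCurveOn (Y x) f (Icc a b))
    (hYK : ∀ x ∈ K, MapsTo (Y x) (Icc a b) K)
    (huniq : ∀ y₁ y₂, IsIntegralCurveOn y₁ f (Icc a b) → IsIntegralCurveOn y₂ f (Icc a b) →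
      MapsTo y₁ (Icc a b) K → MapsTo y₂ (Icc a b) K → y₁ a = y₂ a → EqOn y₁ y₂ (Icc a b))
    {t : ℝ} (ht : t ∈ Icc a b) : ContinuousOn (fun x ↦ Y x t) K := by
  have ha : a ∈ Icc a b := ⟨le_rfl, ht.1.trans ht.2⟩
  rw [continuousOn_iff_continuous_domRestrict, continuous_iff_seqContinuous]
  intro u x hu
  refine tendsto_of_subseq_tendsto fun ns hns ↦ ?_
  obtain ⟨z, hz, hzK, φ, hφ, hlim⟩ := exists_subseq_tendsto_isIntegralCurveOn_of_isCompact hK hf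
    (fun n ↦ hY (u (ns n)) (u (ns n)).2) fun n ↦ hYK (u (ns n)) (u (ns n)).2
  have hza : z a = x := tendsto_nhds_unique (hlim a ha) <| by
    simp only [hY0 _ (u _).2]
    exact (continuous_subtype_val.tendsto x).comp (hu.comp (hns.comp hφ.tendsto_atTop))
  have hzY : z t = Y x t :=
    huniq z (Y x) hz (hY x x.2) hzK (hYK x x.2) (hza.trans (hY0 x x.2).symm) ht
  refine ⟨φ, ?_⟩
  change Tendsto _ _ (𝓝 (Y x t))
  rw [← hzY]
  exact hlim t ht

lemma exists_isIntegralCurveOn_of_contDiff [FiniteDimensional ℝ E] {f : ℝ → E → E} (hab : a ≤ b)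
    (hf : ContDiff ℝ 1 (uncurry f)) (hM : ∀ t x, ‖f t x‖ ≤ M) (x : E) :
    ∃ y, y a = x ∧ IsIntegralCurveOn y f (Icc a b) := by
  have : CompleteSpace E := FiniteDimensional.complete ℝ E
  let R : ℝ≥0 := M * (b - a).toNNReal
  obtain ⟨L, hL⟩ : ∃ L, LipschitzOnWith L (uncurry f) (Icc a b ×ˢ closedBall x R) :=
    hf.contDiffOn.exists_lipschitzOnWith one_ne_zero
      ((convex_Icc a b).prod (convex_closedBall x R))
      (isCompact_Icc.prod (isCompact_closedBall x R))
  have hpl : IsPicardLindelof f (⟨a, le_rfl, hab⟩ : Icc a b) x R 0 M L :=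
    { lipschitzOnWith := fun t ht ↦ by
        rw [← mul_one L]
        exact hL.comp (LipschitzWith.prodMk_left t).lipschitzOnWith fun y hy ↦ ⟨ht, hy⟩
      continuousOn := fun y _ ↦ (hf.continuous.comp (by fun_prop : Continuous (·, y))).continuousOn
      norm_le := fun t _ y _ ↦ hM t y
      mul_max_le := by simp [R, hab] }
  exact hpl.exists_eq_forall_mem_Icc_hasDerivWithinAt₀

theorem exists_isIntegralCurveOn_of_continuous [FiniteDimensional ℝ E] {f : ℝ → E → E}
    (hab : a ≤ b) (hf : Continuous (uncurry f)) (hM : ∀ t x, ‖f t x‖ ≤ M) (x : E) :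
    ∃ y, y a = x ∧ IsIntegralCurveOn y f (Icc a b) := by
  have : CompleteSpace E := FiniteDimensional.complete ℝ E
  choose F hF hFf _ using fun n : ℕ ↦
    hf.exists_contDiff_approx (ε := fun _ ↦ 1 / ((n : ℝ) + 1)) 1 continuous_const
      fun _ ↦ Nat.one_div_pos_of_nat
  have hFM : ∀ n t x, ‖curry (F n) t x‖ ≤ (M + 1 : ℝ≥0) := fun n t x ↦ by
    have hdist : ‖F n (t, x) - f t x‖ ≤ 1 := by
      rw [← dist_eq_norm]
      exact (hFf n (t, x)).le.trans (Nat.one_div_le_one_div (Nat.zero_le n) |>.trans (by simp))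
    calc ‖F n (t, x)‖ ≤ ‖f t x‖ + ‖F n (t, x) - f t x‖ := norm_le_norm_add_norm_sub' _ _
      _ ≤ M + 1 := add_le_add (hM t x) hdist
  choose y hy0 hy using fun n ↦
    exists_isIntegralCurveOn_of_contDiff (f := curry (F n)) hab (hF n) (hFM n) x
  have hyK : ∀ n, MapsTo (y n) (Icc a b) (closedBall x ((M + 1) * (b - a))) := fun n t ht ↦ by
    have hlip := lipschitzOnWith_of_isIntegralCurveOn (convex_Icc a b) (hy n)
      fun t _ ↦ hFM n t (y n t)
    have hdist := hlip.dist_le_mul t ht a (left_mem_Icc.2 hab)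
    rw [hy0, Real.dist_eq, abs_of_nonneg (sub_nonneg.2 ht.1)] at hdist
    refine hdist.trans ?_
    push_cast
    gcongr
    exact ht.2
  have hunif : TendstoUniformlyOn (fun n ↦ uncurry (curry (F n))) (uncurry f) atTop
      (Icc a b ×ˢ closedBall x ((M + 1) * (b - a))) := by
    refine Metric.tendstoUniformlyOn_iff.2 fun ε hε ↦ ?_
    filter_upwards [tendsto_one_div_add_atTop_nhds_zero_nat.eventually_lt_const hε] with n hn p _
    rw [dist_comm]
    exact (hFf n p).trans hn
  obtain ⟨z, hz, -, φ, -, hlim⟩ := exists_subseq_tendsto_isIntegralCurveOn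
    (f := fun n ↦ curry (F n)) (isCompact_closedBall _ _) (fun n ↦ (hF n).continuous.continuousOn)
    (fun n t _ x _ ↦ hFM n t x) hunif hy hyK
  refine ⟨z, tendsto_nhds_unique (hlim a (left_mem_Icc.2 hab)) ?_, hz⟩
  simp [hy0]

end IntegralCurves

section BoundingFunctions
open Filter Function Topology
open scoped BoundedContinuousFunction

lemma exists_first_exit_mem_frontier {X : Type*} [TopologicalSpace X] {G : Set X}
    (hG : IsOpen G) {y : ℝ → X} {a b t : ℝ} (hy : ContinuousOn y (Icc a b)) (ha : y a ∈ G)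
    (ht : t ∈ Icc a b) (hyt : y t ∉ G) :
    ∃ τ ∈ Ioc a b, y τ ∈ frontier G ∧ ∀ s ∈ Ico a τ, y s ∈ G := by
  have hexit : IsCompact (Icc a b ∩ y ⁻¹' Gᶜ) :=
    isCompact_Icc.of_isClosed_subset (hy.preimage_isClosed_of_isClosed isClosed_Icc
      hG.isClosed_compl) inter_subset_left
  obtain ⟨τ, ⟨hτ, hyτ⟩, hleast⟩ := hexit.exists_isLeast ⟨t, ht, hyt⟩
  have hbefore : ∀ s ∈ Ico a τ, y s ∈ G := fun s hs ↦ by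
    by_contra hys
    exact hs.2.not_ge (hleast ⟨⟨hs.1, hs.2.le.trans hτ.2⟩, hys⟩)
  have haτ : a < τ := hτ.1.lt_of_ne fun h ↦ hyτ (h ▸ ha)
  have hclosure : y τ ∈ closure G :=
    ((hy τ hτ).mono (Ico_subset_Icc_self.trans (Icc_subset_Icc_right hτ.2))).mem_closure
      (by rw [closure_Ico haτ.ne]; exact right_mem_Icc.2 haτ.le) hbefore
  exact ⟨τ, ⟨haτ, hτ.2⟩, hG.frontier_eq ▸ ⟨hclosure, hyτ⟩, hbefore⟩

lemma eventually_le_of_hasDerivAt_nonpos {h h' : ℝ → ℝ} {t : ℝ}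
    (hcont : ContinuousWithinAt h (Iic t) t) (hd : ∀ᶠ s in 𝓝[<] t, HasDerivAt h (h' s) s)
    (hnonpos : ∀ᶠ s in 𝓝[<] t, h' s ≤ 0) : ∀ᶠ s in 𝓝[<] t, h t ≤ h s := by
  obtain ⟨l, hl, hsub⟩ := mem_nhdsLT_iff_exists_Ioo_subset.1 (hd.and hnonpos)
  filter_upwards [Ioo_mem_nhdsLT hl] with s hs
  have hderiv : ∀ r ∈ Ico s t, HasDerivAt h (h' r) r ∧ h' r ≤ 0 := fun r hr ↦
    hsub ⟨hs.1.trans_le hr.1, hr.2⟩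
  refine antitoneOn_of_hasDerivWithinAt_nonpos (convex_Icc s t) (fun r hr ↦ ?_)
    (f' := h') (fun r hr ↦ ?_) (fun r hr ↦ ?_) (left_mem_Icc.2 hs.2.le) (right_mem_Icc.2 hs.2.le)
    hs.2.le
  · rcases hr.2.eq_or_lt with rfl | hrt
    · exact hcont.mono Icc_subset_Iic_self
    · exact (hderiv r ⟨hr.1, hrt⟩).1.continuousAt.continuousWithinAt
  all_goals rw [interior_Icc] at hr
  · exact (hderiv r (Ioo_subset_Ico_self hr)).1.hasDerivWithinAt
  · exact (hderiv r (Ioo_subset_Ico_self hr)).2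

variable {E : Type*} [NormedAddCommGroup E] [NormedSpace ℝ E] {a b : ℝ} {G : Set E}
  {V : E → E → ℝ} {f : ℝ → E → E}

/-- `V` is a bounding function for the set `G` at its boundary point `u`: it vanishes at `u` and is
negative on the part of `G` near `u`. Only germs at `u` matter, so no radius is part of the data,
and differentiability is required instead of `C¹` regularity. -/
structure IsBoundingFunctionAt (G : Set E) (u : E) (V : E → ℝ) : Prop where
  apply_eq_zero : V u = 0
  eventually_neg : ∀ᶠ x in 𝓝[G] u, V x < 0
  eventually_differentiableAt : ∀ᶠ x in 𝓝 u, DifferentiableAt ℝ V x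

lemma isBoundingFunctionAt_of_contDiffOn_ball {u : E} {V : E → ℝ} {r : ℝ} (hr : 0 < r)
    (hV : ContDiffOn ℝ 1 V (ball u r)) (h0 : V u = 0) (hneg : ∀ x ∈ G ∩ ball u r, V x < 0) :
    IsBoundingFunctionAt G u V where
  apply_eq_zero := h0
  eventually_neg := eventually_of_mem (inter_mem_nhdsWithin G (ball_mem_nhds u hr)) hneg
  eventually_differentiableAt := by
    filter_upwards [ball_mem_nhds u hr] with x hx
    exact (hV.differentiableOn one_ne_zero).differentiableAt (isOpen_ball.mem_nhds hx)

lemma eventually_fderiv_nonpos_of_inner_gradient_nonpos {F : Type*} [NormedAddCommGroup F]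
    [InnerProductSpace ℝ F] [CompleteSpace F] {ι : Type*} {G : Set F} {u : F} {V : F → ℝ}
    {f : ι → F → F} {S : Set ι} {ρ : ℝ} (hρ : 0 < ρ)
    (h : ∀ t ∈ S, ∀ x ∈ G ∩ ball u ρ, ⟪f t x, gradient V x⟫ ≤ 0) :
    ∀ᶠ x in 𝓝[G] u, ∀ t ∈ S, fderiv ℝ V x (f t x) ≤ 0 := by
  filter_upwards [inter_mem_nhdsWithin G (ball_mem_nhds u hρ)] with x hx t ht
  rw [← inner_gradient_left, real_inner_comm]
  exact h t ht x hx

theorem mapsTo_of_isIntegralCurveOn_of_isBoundingFunctionAt (hG : IsOpen G)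
    (hV : ∀ u ∈ frontier G, IsBoundingFunctionAt G u (V u))
    (hsub : ∀ u ∈ frontier G, ∀ᶠ x in 𝓝[G] u, ∀ t ∈ Icc a b, fderiv ℝ (V u) x (f t x) ≤ 0)
    {y : ℝ → E} (hy : IsIntegralCurveOn y f (Icc a b)) (ha : y a ∈ G) :
    MapsTo y (Icc a b) G := by
  intro t ht
  by_contra hyt
  obtain ⟨τ, hτ, hyτ, hbefore⟩ := exists_first_exit_mem_frontier hG hy.continuousOn ha ht hyt
  have hτ' : Ioo a τ ∈ 𝓝[<] τ := Ioo_mem_nhdsLT hτ.1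
  have hsubset : Ioo a τ ⊆ Ioo a b := Ioo_subset_Ioo_right hτ.2
  have hcont : ContinuousWithinAt y (Iic τ) τ :=
    ((hy.continuousOn τ (Ioc_subset_Icc_self hτ)).mono
      (Icc_subset_Icc_right hτ.2)).mono_of_mem_nhdsWithin (Icc_mem_nhdsLE hτ.1)
  have hlim : Tendsto y (𝓝[<] τ) (𝓝[G] y τ) :=
    tendsto_nhdsWithin_iff.2 ⟨hcont.mono Iio_subset_Iic_self,
      eventually_of_mem hτ' fun s hs ↦ hbefore s (Ioo_subset_Ico_self hs)⟩
  have hdiff := (hV _ hyτ).eventually_differentiableAt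
  have hderiv : ∀ᶠ s in 𝓝[<] τ,
      HasDerivAt (V (y τ) ∘ y) (fderiv ℝ (V (y τ)) (y s) (f s (y s))) s := by
    filter_upwards [hτ', (hlim.mono_right nhdsWithin_le_nhds).eventually hdiff] with s hs hds
    exact hds.hasFDerivAt.comp_hasDerivAt s
      ((hy s (Ioo_subset_Icc_self (hsubset hs))).hasDerivAt (Icc_mem_nhds_iff.2 (hsubset hs)))
  have hnonpos : ∀ᶠ s in 𝓝[<] τ, fderiv ℝ (V (y τ)) (y s) (f s (y s)) ≤ 0 := by
    filter_upwards [hτ', hlim.eventually (hsub _ hyτ)] with s hs hsubs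
    exact hsubs s (Ioo_subset_Icc_self (hsubset hs))
  have hge : ∀ᶠ s in 𝓝[<] τ, V (y τ) (y τ) ≤ V (y τ) (y s) := eventually_le_of_hasDerivAt_nonpos
    (hdiff.self_of_nhds.continuousAt.comp_continuousWithinAt hcont) hderiv hnonpos
  obtain ⟨s, hneg, hpos⟩ := ((hlim.eventually (hV _ hyτ).eventually_neg).and hge).exists
  exact hneg.not_ge ((hV _ hyτ).apply_eq_zero ▸ hpos)

lemma exists_boundedContinuousFunction_eqOn {X : Type*} [TopologicalSpace X] [NormalSpace X]
    [T2Space X] [FiniteDimensional ℝ E] {s : Set X} (hs : IsCompact s) {f : X → E}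
    (hf : ContinuousOn f s) : ∃ g : X →ᵇ E, EqOn g f s := by
  have : CompactSpace s := isCompact_iff_compactSpace.1 hs
  obtain ⟨g, -, hg⟩ := BoundedContinuousFunction.exists_norm_eq_domRestrict_eq hs.isClosed ℝ
    (.mkOfCompact ⟨s.domRestrict f, hf.domRestrict⟩)
  exact ⟨g, fun x hx ↦ DFunLike.congr_fun hg ⟨x, hx⟩⟩

lemma exists_isIntegralCurveOn_mapsTo_of_mem [FiniteDimensional ℝ E] (hab : a ≤ b)
    (hf : ContinuousOn (uncurry f) (Icc a b ×ˢ closure G)) (hG : IsOpen G)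
    (hGb : Bornology.IsBounded G) (hV : ∀ u ∈ frontier G, IsBoundingFunctionAt G u (V u))
    (hsub : ∀ u ∈ frontier G, ∀ᶠ x in 𝓝[G] u, ∀ t ∈ Icc a b, fderiv ℝ (V u) x (f t x) ≤ 0)
    {x : E} (hx : x ∈ G) :
    ∃ y, y a = x ∧ IsIntegralCurveOn y f (Icc a b) ∧ MapsTo y (Icc a b) G := by
  have : ProperSpace E := FiniteDimensional.proper ℝ E
  obtain ⟨g, hg⟩ := exists_boundedContinuousFunction_eqOn
    (isCompact_Icc.prod hGb.isCompact_closure) hf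
  have hgf : ∀ t ∈ Icc a b, ∀ x ∈ G, g (t, x) = f t x := fun t ht x hx ↦
    hg ⟨ht, subset_closure hx⟩
  obtain ⟨y, hya, hy⟩ := exists_isIntegralCurveOn_of_continuous (f := curry g) (M := ‖g‖₊) hab
    g.continuous (fun t x ↦ g.norm_coe_le_norm (t, x)) x
  have hyG : MapsTo y (Icc a b) G := by
    refine mapsTo_of_isIntegralCurveOn_of_isBoundingFunctionAt hG hV (fun u hu ↦ ?_) hy (hya ▸ hx)
    filter_upwards [hsub u hu, self_mem_nhdsWithin] with x hsubx hxG t ht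
    rw [curry_apply, hgf t ht x hxG]
    exact hsubx t ht
  refine ⟨y, hya, fun t ht ↦ ?_, hyG⟩
  rw [← hgf t ht _ (hyG ht)]
  exact hy t ht

lemma exists_isIntegralCurveOn_mapsTo_closure [FiniteDimensional ℝ E] (hab : a ≤ b)
    (hf : ContinuousOn (uncurry f) (Icc a b ×ˢ closure G)) (hG : IsOpen G)
    (hGb : Bornology.IsBounded G) (hV : ∀ u ∈ frontier G, IsBoundingFunctionAt G u (V u))
    (hsub : ∀ u ∈ frontier G, ∀ᶠ x in 𝓝[G] u, ∀ t ∈ Icc a b, fderiv ℝ (V u) x (f t x) ≤ 0)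
    {x : E} (hx : x ∈ closure G) :
    ∃ y, y a = x ∧ IsIntegralCurveOn y f (Icc a b) ∧ MapsTo y (Icc a b) (closure G) := by
  have : ProperSpace E := FiniteDimensional.proper ℝ E
  have : CompleteSpace E := FiniteDimensional.complete ℝ E
  obtain ⟨u, huG, hux⟩ := mem_closure_iff_seq_limit.1 hx
  choose y hya hy hyG using fun n ↦
    exists_isIntegralCurveOn_mapsTo_of_mem hab hf hG hGb hV hsub (huG n)
  obtain ⟨z, hz, hzG, φ, hφ, hlim⟩ := exists_subseq_tendsto_isIntegralCurveOn_of_isCompact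
    hGb.isCompact_closure hf hy fun n ↦ (hyG n).mono_right subset_closure
  refine ⟨z, tendsto_nhds_unique (hlim a (left_mem_Icc.2 hab)) ?_, hz, hzG⟩
  simp only [hya]
  exact hux.comp hφ.tendsto_atTop

theorem periodic_solution_of_bounding_functions_uniqueness_general [FiniteDimensional ℝ E]
    {T : ℝ} (hT : 0 ≤ T) (hf : ContinuousOn (uncurry f) (Icc 0 T ×ˢ closure G)) (hG : IsOpen G)
    (hGb : Bornology.IsBounded G) (hV : ∀ u ∈ frontier G, IsBoundingFunctionAt G u (V u))
    (hsub : ∀ u ∈ frontier G, ∀ᶠ x in 𝓝[G] u, ∀ t ∈ Icc 0 T, fderiv ℝ (V u) x (f t x) ≤ 0)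
    (hfix : HasFixedPointProperty (closure G))
    (huniq : ∀ y₁ y₂, IsIntegralCurveOn y₁ f (Icc 0 T) → IsIntegralCurveOn y₂ f (Icc 0 T) →
      MapsTo y₁ (Icc 0 T) (closure G) → MapsTo y₂ (Icc 0 T) (closure G) → y₁ 0 = y₂ 0 →
      EqOn y₁ y₂ (Icc 0 T)) :
    ∃ y, IsIntegralCurveOn y f (Icc 0 T) ∧ y 0 = y T ∧ MapsTo y (Icc 0 T) (closure G) := by
  have : ProperSpace E := FiniteDimensional.proper ℝ E
  have : CompleteSpace E := FiniteDimensional.complete ℝ E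
  have hTmem : T ∈ Icc 0 T := right_mem_Icc.2 hT
  choose! Y hY0 hY hYG using fun x (hx : x ∈ closure G) ↦
    exists_isIntegralCurveOn_mapsTo_closure hT hf hG hGb hV hsub hx
  have hcont : ContinuousOn (fun x ↦ Y x T) (closure G) :=
    continuousOn_of_isIntegralCurveOn_unique hGb.isCompact_closure hf hY0 hY hYG huniq hTmem
  have hmaps : MapsTo (fun x ↦ Y x T) (closure G) (closure G) := fun x hx ↦ hYG x hx hTmem
  obtain ⟨x, hx⟩ := hfix ⟨hmaps.restrict, hcont.mapsToRestrict hmaps⟩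
  exact ⟨Y x, hY x x.2, (hY0 x x.2).trans (congrArg Subtype.val hx.symm), hYG x x.2⟩

end BoundingFunctions

/-- Under a family of bounding functions for `G` satisfying the
sub-tangential condition near each boundary point, if `cl G` is homeomorphic to a
closed ball of `ℝ^N` and solutions of the Cauchy problems with values in `cl G` are
unique, then `ẏ = f(t,y)` has a `T`-periodic solution with values in `cl G`. -/
theorem periodic_solution_of_bounding_functions_uniqueness
    {N : ℕ} {T : ℝ} (hT : 0 < T)
    (Ω : Set (EuclideanSpace ℝ (Fin N))) (hΩ : IsOpen Ω)
    (f : ℝ → EuclideanSpace ℝ (Fin N) → EuclideanSpace ℝ (Fin N))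
    (hf : ContinuousOn (fun p : ℝ × EuclideanSpace ℝ (Fin N) => f p.1 p.2)
      (Icc (0 : ℝ) T ×ˢ Ω))
    (G : Set (EuclideanSpace ℝ (Fin N)))
    (hG : IsOpen G) (hGb : Bornology.IsBounded G) (hGΩ : closure G ⊆ Ω)
    (r : EuclideanSpace ℝ (Fin N) → ℝ)
    (V : EuclideanSpace ℝ (Fin N) → EuclideanSpace ℝ (Fin N) → ℝ)
    (hbd : ∀ u ∈ frontier G, 0 < r u ∧ ContDiffOn ℝ 1 (V u) (ball u (r u)) ∧
      V u u = 0 ∧ ∀ x ∈ G ∩ ball u (r u), V u x < 0)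
    (hsub : ∀ u ∈ frontier G, ∃ ρ ∈ Ioc (0 : ℝ) (r u),
      ∀ t ∈ Icc (0 : ℝ) T, ∀ x ∈ G ∩ ball u ρ,
        ⟪f t x, gradient (V u) x⟫ ≤ 0)
    (hball : ∃ (x₀ : EuclideanSpace ℝ (Fin N)) (R : ℝ), 0 < R ∧
      Nonempty ((closure G : Set (EuclideanSpace ℝ (Fin N))) ≃ₜ
        (closedBall x₀ R : Set (EuclideanSpace ℝ (Fin N)))))
    (huniq : ∀ a b : ℝ, 0 ≤ a → b ≤ T →
      ∀ y₁ y₂ : ℝ → EuclideanSpace ℝ (Fin N),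
      (∀ t ∈ Icc a b, y₁ t ∈ closure G) →
      (∀ t ∈ Icc a b, y₂ t ∈ closure G) →
      (∀ t ∈ Icc a b, HasDerivWithinAt y₁ (f t (y₁ t)) (Icc a b) t) →
      (∀ t ∈ Icc a b, HasDerivWithinAt y₂ (f t (y₂ t)) (Icc a b) t) →
      ∀ t₀ ∈ Icc a b, y₁ t₀ = y₂ t₀ → ∀ t ∈ Icc a b, y₁ t = y₂ t) :
    ∃ y : ℝ → EuclideanSpace ℝ (Fin N),
      (∀ t ∈ Icc (0 : ℝ) T, y t ∈ Ω) ∧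
      (∀ t ∈ Icc (0 : ℝ) T, HasDerivWithinAt y (f t (y t)) (Icc (0 : ℝ) T) t) ∧
      y 0 = y T ∧
      (∀ t ∈ Icc (0 : ℝ) T, y t ∈ closure G) := by
  obtain ⟨x₀, R, hR, ⟨e⟩⟩ := hball
  have hfix : HasFixedPointProperty (closure G) := hasFixedPointProperty_of_homeomorph e <|
    hasFixedPointProperty_of_convex_of_isCompact (convex_closedBall x₀ R)
      (isCompact_closedBall x₀ R) ⟨x₀, ball_subset_interior_closedBall (mem_ball_self hR)⟩
  have hV : ∀ u ∈ frontier G, IsBoundingFunctionAt G u (V u) := fun u hu ↦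
    have ⟨hr, hdiff, h0, hneg⟩ := hbd u hu
    isBoundingFunctionAt_of_contDiffOn_ball hr hdiff h0 hneg
  obtain ⟨y, hy, hper, hyG⟩ := periodic_solution_of_bounding_functions_uniqueness_general hT.le
    (hf.mono (prod_mono_right hGΩ)) hG hGb hV
    (fun u hu ↦ have ⟨_, hρ, hle⟩ := hsub u hu
      eventually_fderiv_nonpos_of_inner_gradient_nonpos hρ.1 hle) hfix
    fun y₁ y₂ h₁ h₂ hm₁ hm₂ h0 ↦
      huniq 0 T le_rfl le_rfl y₁ y₂ hm₁ hm₂ h₁ h₂ 0 (left_mem_Icc.2 hT.le) h0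
  exact ⟨y, fun t ht ↦ hGΩ (hyG ht), hy, hper, hyG⟩
end
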